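/- Fix a positive integer δ and let G = (V,E) be a 2-connected finite simple graph. The base polytope B(M(G)) is δ-Gorenstein if and only if G possesses a weight function w : E → {1, δ−1} with w(e) = 1 whenever G∖e is 2-connected and w(e) = δ−1 whenever G/e is 2-connected, and the following equalities (♠)_δ hold: (1) w(E) = δ(|V|−1); (2) w(E(S)) + 1 = δ(|S|−1) for every good flat S ⊆ V. -/

import Mathlib

/-!
Let `G` be a `2`-connected graph on `n` vertices. The proof determines the reduced equations of the
facets of the cone over the base polytope `B(M(G))`. Apart from the case of a single edge, where the
polytope is a point and the height `t` is the only equation, they are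

* `(|S| - 1) t - x(E(S))` for the good flats `S`, and
* `x_e` for the edges `e` with `G∖e` `2`-connected, which on the span of the cone equals
  `(n - 1) t - x(E \ e)`.

Both are rank forms (`fS`) and are nonnegative on spanning trees. They define facets by an exchange
argument: for two edges at a common vertex `v` whose other ends are joined by a forest avoiding `v`
there are two spanning trees that contain this forest and differ in just these edges, and
connectivity of `S` minus a vertex (or of the complement of `S`) propagates such exchanges to all
edges inside `S` (or to all edges not inside `S`), see `dv_mem_inside` and `dv_mem_outside`. So
`facet_good` and `facet_del` hold. Since a good flat of a `2`-connected graph is a `2`-connected set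
with connected complement (`goodFlat_iff`), the edges `e` with `G/e` `2`-connected are the good flats
with two vertices. In a `2`-connected graph with at least three vertices every edge can be deleted or
contracted (`delete_or_contract`), so the coordinates of a Gorenstein point satisfy `(♠)_δ`; this is
`spade_of_gorenstein`.

Conversely let `w` satisfy `(♠)_δ`. Uncrossing at cutvertices and along disconnected complements
shows that `w` satisfies the rank inequality of every nonempty vertex set, as it does for good flats
(`fS_nonneg`). Comparing `w` with a spanning tree of minimal cost on the components of the sublevel
graphs of the cost, and summing by parts, gives `w ∈ δ B(M(G))` (`mem_polytope`). The differences of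
unit vectors of edges generate the lattice at height zero (`mem_lattice`). Finally, the spanning
trees on a facet minimize a cost, hence are connected on the components of its sublevel graphs. So a
rank form vanishes on the facet, and as a facet form is not a nontrivial sum of nonnegative forms
(`no_split`), the vertex set of this form is a good flat, or the form is that of a deletion
(`facet_cases`). This yields `gorenstein_of_spade`.
-/

open SimpleGraph
open scoped Pointwise

namespace Gor

/-! ### Graph-theoretic notions -/

/-- A graph is `2`-connected if it is connected and remains connected after deletion of any
single vertex.  A single edge `K₂` counts as `2`-connected. -/
def IsTwoConnected {V : Type*} (G : SimpleGraph V) : Prop :=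
  G.Connected ∧ ∀ v : V, (G.induce {u : V | u ≠ v}).Connected

/-- `E(S)`: the set of edges of `G` with both endpoints in `S`. -/
def edgesIn {V : Type*} (G : SimpleGraph V) (S : Set V) : Set (Sym2 V) :=
  {e ∈ G.edgeSet | ∀ v ∈ e, v ∈ S}

/-- The simple graph obtained from `G` by contracting all edges in `F`: its vertices are the
connected components of the graph with edge set `F`, two being adjacent if some edge of `G`
joins them. -/
def contractEdges {V : Type*} (G : SimpleGraph V) (F : Set (Sym2 V)) :
    SimpleGraph (SimpleGraph.fromEdgeSet F).ConnectedComponent :=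
  SimpleGraph.fromRel fun c d => ∃ u v : V, G.Adj u v ∧
    (SimpleGraph.fromEdgeSet F).connectedComponentMk u = c ∧
    (SimpleGraph.fromEdgeSet F).connectedComponentMk v = d

/-- `S` is a good flat of `G`: the induced subgraph `G[S]` is `2`-connected and the contraction
of all edges of `E(S)` in `G` is `2`-connected. -/
def IsGoodFlat {V : Type*} (G : SimpleGraph V) (S : Set V) : Prop :=
  IsTwoConnected (G.induce S) ∧ IsTwoConnected (contractEdges G (edgesIn G S))

/-- The weight function `w : E → {1, δ-1}` with `w e = 1` whenever `G∖e` is `2`-connected and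
`w e = δ - 1` whenever `G/e` is `2`-connected. -/
def IsCanonicalWeight {V : Type*} (G : SimpleGraph V) (δ : ℕ) (w : Sym2 V → ℕ) : Prop :=
  (∀ e ∈ G.edgeSet, w e = 1 ∨ w e = δ - 1) ∧
  (∀ e ∈ G.edgeSet, IsTwoConnected (G.deleteEdges {e}) → w e = 1) ∧
  (∀ e ∈ G.edgeSet, IsTwoConnected (contractEdges G {e}) → w e = δ - 1)

/-- A `2`-connected graph `G` satisfies `(♠)_δ` via the weight function `w`. -/
def SatisfiesSpade {V : Type*} (G : SimpleGraph V) (δ : ℕ) (w : Sym2 V → ℕ) : Prop :=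
  IsTwoConnected G ∧ IsCanonicalWeight G δ w ∧
  (∑ᶠ e ∈ G.edgeSet, w e) = δ * (Nat.card V - 1) ∧
  ∀ S : Set V, IsGoodFlat G S → (∑ᶠ e ∈ edgesIn G S, w e) + 1 = δ * (S.ncard - 1)

/-- The number of `2`-connected components (blocks) of a graph: the number of inclusion-maximal
vertex subsets inducing a `2`-connected subgraph. -/
noncomputable def numBlocks {V : Type*} (G : SimpleGraph V) : ℕ :=
  {S : Set V | IsTwoConnected (G.induce S) ∧
    ∀ T : Set V, S ⊆ T → IsTwoConnected (G.induce T) → S = T}.ncard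

/-! ### Lattice polytopes and the Gorenstein property -/

/-- A point of `ℝ^η` is a lattice point if all its coordinates are integers. -/
def IsLatticePoint {η : Type*} (x : η → ℝ) : Prop := ∀ i, ∃ z : ℤ, x i = z

/-- The cone over a polytope `P ⊆ ℝ^η`, living in `ℝ^η × ℝ`. -/
def coneOver {η : Type*} (P : Set (η → ℝ)) : Set ((η → ℝ) × ℝ) :=
  {y | ∃ t : ℝ, ∃ p ∈ P, 0 ≤ t ∧ y = (t • p, t)}

/-- The lattice affinely spanned by the lattice points of `P`, placed at height one;
i.e. the subgroup of `ℝ^η × ℝ` generated by `{(p, 1) : p a lattice point of P}`. -/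
def coneLattice {η : Type*} (P : Set (η → ℝ)) : Submodule ℤ ((η → ℝ) × ℝ) :=
  Submodule.span ℤ {y | ∃ p ∈ P, IsLatticePoint p ∧ y = (p, 1)}

/-- `h` is a linear form cutting out a facet-supporting hyperplane of the cone over `P`:
it is nonnegative on the cone and vanishes on a subset of the cone spanning one dimension less
than the cone itself. -/
def IsFacetForm {η : Type*} (P : Set (η → ℝ)) (h : ((η → ℝ) × ℝ) →ₗ[ℝ] ℝ) : Prop :=
  (∀ y ∈ coneOver P, 0 ≤ h y) ∧
  Module.finrank ℝ (Submodule.span ℝ {y ∈ coneOver P | h y = 0}) + 1 =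
    Module.finrank ℝ (Submodule.span ℝ (coneOver P))

/-- `h` is reduced with respect to the lattice spanned by `P`: it takes integer values on the
lattice and attains the value `1` there. -/
def IsReducedForm {η : Type*} (P : Set (η → ℝ)) (h : ((η → ℝ) × ℝ) →ₗ[ℝ] ℝ) : Prop :=
  (∀ y ∈ coneLattice P, ∃ z : ℤ, h y = z) ∧ ∃ y ∈ coneLattice P, h y = 1

/-- A polytope `P`, regarded as full-dimensional in the affine lattice it spans, is
`δ`-Gorenstein if there is a lattice point `v ∈ δP` with `h (v, δ) = 1` for the reduced
equation `h` of every facet-supporting hyperplane of the cone over `P`. -/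
def IsDeltaGorenstein {η : Type*} (P : Set (η → ℝ)) (δ : ℕ) : Prop :=
  ∃ v : η → ℝ, v ∈ (δ : ℝ) • P ∧ (v, (δ : ℝ)) ∈ coneLattice P ∧
    ∀ h : ((η → ℝ) × ℝ) →ₗ[ℝ] ℝ, IsFacetForm P h → IsReducedForm P h → h (v, (δ : ℝ)) = 1

/-- A polytope is Gorenstein if it is `δ`-Gorenstein for some positive integer `δ`. -/
def IsGorenstein {η : Type*} (P : Set (η → ℝ)) : Prop :=
  ∃ δ : ℕ, 0 < δ ∧ IsDeltaGorenstein P δ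

/-! ### Graphic matroids of simple graphs and their polytopes -/

/-- An independent set of the graphic matroid of `G`: a set of edges forming a forest. -/
def IsGraphicIndep {V : Type*} (G : SimpleGraph V) (I : Set (Sym2 V)) : Prop :=
  I ⊆ G.edgeSet ∧ (SimpleGraph.fromEdgeSet I).IsAcyclic

/-- A basis of the graphic matroid of `G`: a maximal forest (spanning forest). -/
def IsGraphicBasis {V : Type*} (G : SimpleGraph V) (B : Set (Sym2 V)) : Prop :=
  IsGraphicIndep G B ∧ ∀ e ∈ G.edgeSet, e ∉ B → ¬ IsGraphicIndep G (insert e B)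

/-- The base polytope `B(M(G))` of the graphic matroid of `G`: the convex hull of the
indicator vectors of the bases. -/
def basePolytope {V : Type*} (G : SimpleGraph V) : Set (Sym2 V → ℝ) :=
  convexHull ℝ {x | ∃ B : Set (Sym2 V), IsGraphicBasis G B ∧
    x = B.indicator fun _ => (1 : ℝ)}

/-- The base polytope `B(M(G))`, regarded inside `ℝ^E` where `E` is the edge set of `G`. -/
def basePolytopeE {V : Type*} (G : SimpleGraph V) : Set (↥G.edgeSet → ℝ) :=
  convexHull ℝ {x | ∃ B : Set (Sym2 V), IsGraphicBasis G B ∧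
    x = (Subtype.val ⁻¹' B).indicator fun _ => (1 : ℝ)}

/-- A homogeneous inequality `g x ≥ 0` is valid for `P` and defines a facet (a supporting
hyperplane whose intersection with `P` has affine dimension one less than `P`). -/
def IsSupportingFaceIneq {α : Type*} (P : Set (α → ℝ)) (g : (α → ℝ) → ℝ) : Prop :=
  (∀ x ∈ P, 0 ≤ g x) ∧
  Module.finrank ℝ (vectorSpan ℝ {x ∈ P | g x = 0}) + 1 =
    Module.finrank ℝ (vectorSpan ℝ P)

/-! ### Multigraphs -/

/-- A finite undirected loopless multigraph on a vertex type `V` with edge type `E`. -/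
structure Multigraph (V E : Type*) where
  ends : E → Sym2 V
  loopless : ∀ e, ¬ (ends e).IsDiag

/-- The underlying simple graph of a multigraph. -/
def Multigraph.toSimple {V E : Type*} (G : Multigraph V E) : SimpleGraph V :=
  SimpleGraph.fromEdgeSet (Set.range G.ends)

/-- `E(S)` for a multigraph: the set of edges with both endpoints in `S`. -/
def Multigraph.edgesIn {V E : Type*} (G : Multigraph V E) (S : Set V) : Set E :=
  {e | ∀ v ∈ G.ends e, v ∈ S}

/-- A set of edges of a multigraph is a forest (an independent set of the graphic matroid):
no two parallel edges and no cycle. -/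
def IsMultiForest {V E : Type*} (G : Multigraph V E) (I : Set E) : Prop :=
  Set.InjOn G.ends I ∧ (SimpleGraph.fromEdgeSet (G.ends '' I)).IsAcyclic

/-- The independence polytope `P(M(G))` of the graphic matroid of a multigraph `G`. -/
def multiIndepPolytope {V E : Type*} (G : Multigraph V E) : Set (E → ℝ) :=
  convexHull ℝ {x | ∃ I : Set E, IsMultiForest G I ∧ x = I.indicator fun _ => (1 : ℝ)}

/-- The rank of a set of edges in the graphic matroid of a multigraph. -/
noncomputable def mrank {V E : Type*} (G : Multigraph V E) (A : Set E) : ℕ :=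
  sSup {n | ∃ I ⊆ A, IsMultiForest G I ∧ I.ncard = n}

/-- A flat of the graphic matroid of a multigraph: adding any further edge increases the rank. -/
def IsGraphicFlat {V E : Type*} (G : Multigraph V E) (A : Set E) : Prop :=
  ∀ e : E, e ∉ A → mrank G (insert e A) ≠ mrank G A

/-- A circuit of the graphic matroid of a multigraph: a minimal dependent set of edges. -/
def IsMultiCircuit {V E : Type*} (G : Multigraph V E) (C : Set E) : Prop :=
  ¬ IsMultiForest G C ∧ ∀ C' ⊂ C, IsMultiForest G C'

/-- The restriction of the graphic matroid of `G` to `A` is a connected matroid: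
`A` is nonempty and any two distinct elements of `A` lie on a common circuit inside `A`. -/
def ConnectedRestriction {V E : Type*} (G : Multigraph V E) (A : Set E) : Prop :=
  A.Nonempty ∧ ∀ e ∈ A, ∀ f ∈ A, e ≠ f → ∃ C ⊆ A, IsMultiCircuit G C ∧ e ∈ C ∧ f ∈ C

/-- `G` is the `m`-blow-up of the simple graph `H`: every edge of `H` is replaced by exactly
`m` parallel edges and there are no other edges. -/
def IsBlowUp {V E : Type*} (G : Multigraph V E) (m : ℕ) (H : SimpleGraph V) : Prop :=
  (∀ p ∈ H.edgeSet, {e : E | G.ends e = p}.ncard = m) ∧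
  ∀ p : Sym2 V, p ∉ H.edgeSet → {e : E | G.ends e = p} = ∅

/-- The condition `(♣)_δ`: `(δ-1)|E(S)| + 1 = δ(|S|-1)` for every vertex subset `S` inducing a
`2`-connected subgraph. -/
def ClubCond {V : Type*} (H : SimpleGraph V) (δ : ℕ) : Prop :=
  ∀ S : Set V, IsTwoConnected (H.induce S) →
    (δ - 1) * (edgesIn H S).ncard + 1 = δ * (S.ncard - 1)

/-! ### Chordality, `K₄` minors, cycle attachments -/

/-- A chordless cycle: a cycle such that every edge of `G` between vertices of the cycle is an
edge of the cycle. -/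
def IsChordlessCycle {V : Type*} (G : SimpleGraph V) {v : V} (c : G.Walk v v) : Prop :=
  c.IsCycle ∧ ∀ e ∈ edgesIn G {u : V | u ∈ c.support}, e ∈ c.edges

/-- `G` is `δ`-chordal: every cycle without a chord has exactly `δ + 1` edges. -/
def IsDeltaChordal {V : Type*} (G : SimpleGraph V) (δ : ℕ) : Prop :=
  ∀ (v : V) (c : G.Walk v v), IsChordlessCycle G c → c.length = δ + 1

/-- `G` has a `K₄` minor: there are four disjoint nonempty connected branch sets pairwise
joined by an edge. -/
def HasK4Minor {V : Type*} (G : SimpleGraph V) : Prop :=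
  ∃ B : Fin 4 → Set V, (∀ i, (B i).Nonempty) ∧ (∀ i, (G.induce (B i)).Connected) ∧
    (Pairwise fun i j => Disjoint (B i) (B j)) ∧
    (Pairwise fun i j => ∃ u ∈ B i, ∃ v ∈ B j, G.Adj u v)

/-- One step of attaching a new `(δ+1)`-cycle to an edge: `B` is obtained from `A` by adding
`δ - 1` new vertices forming a path of length `δ` between the endpoints of an edge of
`H[A]`, these being all new edges. -/
def AttachStep {V : Type*} (H : SimpleGraph V) (δ : ℕ) (A B : Set V) : Prop :=
  ∃ q : Fin (δ + 1) → V, Function.Injective q ∧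
    H.Adj (q 0) (q (Fin.last δ)) ∧ q 0 ∈ A ∧ q (Fin.last δ) ∈ A ∧
    (∀ i : Fin (δ + 1), i ≠ 0 → i ≠ Fin.last δ → q i ∉ A) ∧
    B = A ∪ {x | ∃ i : Fin (δ + 1), i ≠ 0 ∧ i ≠ Fin.last δ ∧ q i = x} ∧
    edgesIn H B = edgesIn H A ∪ {e | ∃ i : Fin δ, e = s(q i.castSucc, q i.succ)}

/-- `H` can be constructed from the clique `K₂` by repeatedly attaching new `(δ+1)`-cycles to
edges of the preceding graph. -/
def ConstructibleFromK2 {V : Type*} (H : SimpleGraph V) (δ : ℕ) : Prop :=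
  ∃ (k : ℕ) (S : Fin (k + 1) → Set V),
    (∃ u v : V, H.Adj u v ∧ S 0 = {u, v}) ∧
    S (Fin.last k) = Set.univ ∧
    ∀ i : Fin k, AttachStep H δ (S i.castSucc) (S i.succ)

/-! ### Gluings, subdivisions, collisions, ears -/

/-- `G` (with distinguished edge `ab`) is the gluing of the graphs `Gs i` along the edges
`es i`: the disjoint union with all the edges `es i` identified to the single edge `ab`. -/
def IsGluing {ι : Type*} {Vf : ι → Type*} {W : Type*} (Gs : ∀ i, SimpleGraph (Vf i))
    (es : ∀ i, Sym2 (Vf i)) (G : SimpleGraph W) (a b : W) : Prop :=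
  a ≠ b ∧ G.Adj a b ∧
  ∃ φ : ∀ i, Vf i → W,
    (∀ i, Function.Injective (φ i)) ∧
    (∀ x : W, ∃ i, x ∈ Set.range (φ i)) ∧
    (∀ i, Sym2.map (φ i) (es i) = s(a, b)) ∧
    (∀ i j, i ≠ j → Set.range (φ i) ∩ Set.range (φ j) = {a, b}) ∧
    ∀ x y : W, G.Adj x y ↔ ∃ i, ∃ u v, (Gs i).Adj u v ∧ φ i u = x ∧ φ i v = y

/-- `G'` together with the path `q` is the subdivision of `G` obtained by replacing the edge
`uv` by a path of `m` edges `q 0, …, q m` through new vertices. -/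
def IsSubdivisionAt {V W : Type*} (G : SimpleGraph V) (u v : V) {m : ℕ}
    (G' : SimpleGraph W) (q : Fin (m + 1) → W) : Prop :=
  ∃ φ : V → W, Function.Injective φ ∧ Function.Injective q ∧
    q 0 = φ u ∧ q (Fin.last m) = φ v ∧
    (∀ i : Fin (m + 1), i ≠ 0 → i ≠ Fin.last m → q i ∉ Set.range φ) ∧
    (∀ x : W, x ∈ Set.range φ ∨ x ∈ Set.range q) ∧
    ∀ x y : W, G'.Adj x y ↔
      ((∃ a b : V, G.Adj a b ∧ s(a, b) ≠ s(u, v) ∧ φ a = x ∧ φ b = y) ∨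
       ∃ i : Fin m, s(x, y) = s(q i.castSucc, q i.succ))

/-- `G` (with the distinguished nonadjacent pair `a b`) is the collision of `G₁` and `G₂` on
the edges `e₁, e₂`: the disjoint union with `e₁` and `e₂` identified and then deleted. -/
def IsCollision {V₁ V₂ W : Type*} (G₁ : SimpleGraph V₁) (G₂ : SimpleGraph V₂)
    (e₁ : Sym2 V₁) (e₂ : Sym2 V₂) (G : SimpleGraph W) (a b : W) : Prop :=
  a ≠ b ∧ ¬ G.Adj a b ∧
  ∃ (φ₁ : V₁ → W) (φ₂ : V₂ → W),
    Function.Injective φ₁ ∧ Function.Injective φ₂ ∧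
    Sym2.map φ₁ e₁ = s(a, b) ∧ Sym2.map φ₂ e₂ = s(a, b) ∧
    (∀ x : W, x ∈ Set.range φ₁ ∨ x ∈ Set.range φ₂) ∧
    Set.range φ₁ ∩ Set.range φ₂ = {a, b} ∧
    ∀ x y : W, G.Adj x y ↔
      ((∃ u v, G₁.Adj u v ∧ s(u, v) ≠ e₁ ∧ φ₁ u = x ∧ φ₁ v = y) ∨
       (∃ u v, G₂.Adj u v ∧ s(u, v) ≠ e₂ ∧ φ₂ u = x ∧ φ₂ v = y))

/-- The inner vertices of an ear. -/
def earInner {V : Type*} {s : ℕ} (p : Fin (s + 1) → V) : Set V :=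
  {x | ∃ i : Fin (s + 1), i ≠ 0 ∧ i ≠ Fin.last s ∧ p i = x}

/-- The edges of an ear. -/
def earEdges {V : Type*} {s : ℕ} (p : Fin (s + 1) → V) : Set (Sym2 V) :=
  {e | ∃ i : Fin s, e = s(p i.castSucc, p i.succ)}

/-- An `s`-ear of `G`: a path with `s` edges whose inner vertices have degree `2` in `G`. -/
def IsEar {V : Type*} (G : SimpleGraph V) {s : ℕ} (p : Fin (s + 1) → V) : Prop :=
  Function.Injective p ∧ (∀ i : Fin s, G.Adj (p i.castSucc) (p i.succ)) ∧
  ∀ i : Fin (s + 1), i ≠ 0 → i ≠ Fin.last s → (G.neighborSet (p i)).ncard = 2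

/-- `T` is the vertex set of an inclusion-maximal proper `2`-connected induced subgraph. -/
def IsMaxProperTwoConnected {V : Type*} (G : SimpleGraph V) (T : Set V) : Prop :=
  IsTwoConnected (G.induce T) ∧ T ≠ Set.univ ∧
  ∀ T' : Set V, T ⊆ T' → T' ≠ Set.univ → IsTwoConnected (G.induce T') → T' = T

/-! ### `(♠)₂` and `3`-connectivity -/

/-- A `2`-connected graph satisfies the equalities `(♠)₂`:
`|E| = 2(|V|-1)` and `|E(S)| = 2|S| - 3` for every good flat `S`. -/
def Spade2 {V : Type*} (G : SimpleGraph V) : Prop :=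
  IsTwoConnected G ∧ G.edgeSet.ncard = 2 * (Nat.card V - 1) ∧
  ∀ S : Set V, IsGoodFlat G S → (edgesIn G S).ncard = 2 * S.ncard - 3

/-- A graph is `3`-connected if it has more than `3` vertices and remains connected after
deletion of any two vertices. -/
def IsThreeConnected {V : Type*} (G : SimpleGraph V) : Prop :=
  3 < Nat.card V ∧ ∀ u v : V, (G.induce {x : V | x ≠ u ∧ x ≠ v}).Connected

/-! ### Inductive constructions -/

/-- Graphs obtainable from the `δ`-cycle by gluings (Proposition `construction1`) and
`(δ-1)`-subdivisions (Proposition `construction2`). -/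
inductive Obtainable (δ : ℕ) : {W : Type} → SimpleGraph W → Prop
  | cycle {W : Type} (G : SimpleGraph W) (e : G ≃g SimpleGraph.cycleGraph δ) :
      Obtainable δ G
  | glue {Vf : Fin (δ - 1) → Type} {W : Type}
      (Gs : ∀ i, SimpleGraph (Vf i)) (ws : ∀ i, Sym2 (Vf i) → ℕ) (es : ∀ i, Sym2 (Vf i))
      (G : SimpleGraph W) (a b : W)
      (hob : ∀ i, Obtainable δ (Gs i))
      (hsp : ∀ i, SatisfiesSpade (Gs i) δ (ws i))
      (hes : ∀ i, es i ∈ (Gs i).edgeSet)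
      (hwe : ∀ i, ws i (es i) = δ - 1)
      (hgl : IsGluing Gs es G a b) : Obtainable δ G
  | subdivide {V W : Type} (G : SimpleGraph V) (w : Sym2 V → ℕ) (u v : V)
      (G' : SimpleGraph W) (q : Fin (δ - 1 + 1) → W)
      (hob : Obtainable δ G) (hsp : SatisfiesSpade G δ w)
      (huv : G.Adj u v) (hw1 : w s(u, v) = 1)
      (hsub : IsSubdivisionAt G u v G' q) : Obtainable δ G'

/-- Graphs obtainable from the clique `K₄` by a finite sequence of collisions. -/
inductive ObtainableK4 : {W : Type} → SimpleGraph W → Prop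
  | k4 {W : Type} (G : SimpleGraph W) (e : G ≃g (⊤ : SimpleGraph (Fin 4))) :
      ObtainableK4 G
  | collide {V₁ V₂ W : Type} (G₁ : SimpleGraph V₁) (G₂ : SimpleGraph V₂)
      (e₁ : Sym2 V₁) (e₂ : Sym2 V₂) (G : SimpleGraph W) (a b : W)
      (h₁ : ObtainableK4 G₁) (h₂ : ObtainableK4 G₂)
      (he₁ : e₁ ∈ G₁.edgeSet) (he₂ : e₂ ∈ G₂.edgeSet)
      (hc : IsCollision G₁ G₂ e₁ e₂ G a b) : ObtainableK4 G

/-! ### Connectivity of vertex sets -/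

section

variable {V : Type*}

/-- The induced subgraph on the vertex set `S` is connected: `S` is nonempty, and a set of vertices
which is closed under adjacency inside `S` and meets `S` contains `S`. -/
def Linked (G : SimpleGraph V) (S : Set V) : Prop :=
  S.Nonempty ∧ ∀ A : Set V, (∀ a ∈ S, ∀ b ∈ S, G.Adj a b → a ∈ A → b ∈ A) →
    ∀ a ∈ S, ∀ b ∈ S, a ∈ A → b ∈ A

theorem linked_univ_iff (G : SimpleGraph V) : G.Connected ↔ Linked G Set.univ := by
  constructor
  · intro h
    obtain ⟨v⟩ := h.nonempty
    refine ⟨⟨v, trivial⟩, fun A hA a _ b _ ha => ?_⟩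
    obtain ⟨p⟩ := h.preconnected a b
    induction p with
    | nil => exact ha
    | cons hadj p ih => exact ih trivial trivial (hA _ trivial _ trivial hadj ha)
  · rintro ⟨⟨v, -⟩, h⟩
    have : Nonempty V := ⟨v⟩
    refine ⟨fun a b => ?_⟩
    exact h {b | G.Reachable a b} (fun x _ y _ hxy hx => Reachable.trans hx hxy.reachable)
      a trivial b trivial (Reachable.refl a)

theorem linked_induce_iff (G : SimpleGraph V) (S : Set V) (X : Set S) :
    Linked (G.induce S) X ↔ Linked G (Subtype.val '' X) := by
  constructor
  · rintro ⟨⟨v, hv⟩, h⟩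
    refine ⟨⟨v, v, hv, rfl⟩, fun A hA a ha b hb haA => ?_⟩
    obtain ⟨a, ha, rfl⟩ := ha
    obtain ⟨b, hb, rfl⟩ := hb
    exact h (Subtype.val ⁻¹' A)
      (fun x hx y hy hxy hxA => hA x ⟨x, hx, rfl⟩ y ⟨y, hy, rfl⟩ hxy hxA) a ha b hb haA
  · rintro ⟨⟨_, v, hv, rfl⟩, h⟩
    refine ⟨⟨v, hv⟩, fun A hA a ha b hb haA => ?_⟩
    have := h (Subtype.val '' A) ?_ a ⟨a, ha, rfl⟩ b ⟨b, hb, rfl⟩ ⟨a, haA, rfl⟩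
    · obtain ⟨c, hc, hcb⟩ := this
      rwa [← Subtype.ext hcb]
    · rintro _ ⟨x, hx, rfl⟩ _ ⟨y, hy, rfl⟩ hxy ⟨x', hx', hxx⟩
      rw [Subtype.ext hxx] at hx'
      exact ⟨y, hA x hx y hy hxy hx', rfl⟩

theorem linked_iff (G : SimpleGraph V) (S : Set V) : (G.induce S).Connected ↔ Linked G S := by
  rw [linked_univ_iff, linked_induce_iff, Set.image_univ, Subtype.range_coe]

/-- The induced subgraph on the vertex set `S` is `2`-connected. -/
def TL (G : SimpleGraph V) (S : Set V) : Prop :=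
  Linked G S ∧ ∀ v ∈ S, Linked G (S \ {v})

theorem twoConn_induce_iff (G : SimpleGraph V) (S : Set V) :
    IsTwoConnected (G.induce S) ↔ TL G S := by
  unfold IsTwoConnected TL
  rw [linked_iff]
  refine and_congr_right fun _ => ?_
  refine Subtype.forall.trans (forall₂_congr fun v hv => ?_)
  rw [linked_iff, linked_induce_iff]
  have : (Subtype.val '' {u : S | u ≠ ⟨v, hv⟩}) = S \ {v} := by
    ext x
    simp [and_comm]
  rw [this]

theorem twoConn_iff (G : SimpleGraph V) : IsTwoConnected G ↔ TL G Set.univ := by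
  unfold IsTwoConnected TL
  rw [linked_univ_iff]
  refine and_congr_right fun _ => ?_
  simp only [linked_iff, Set.mem_univ, forall_true_left]
  refine forall_congr' fun v => ?_
  have : {u : V | u ≠ v} = Set.univ \ {v} := by ext; simp
  rw [this]

theorem Linked.mono {G G' : SimpleGraph V} {S : Set V} (h : G ≤ G') (hS : Linked G S) :
    Linked G' S :=
  ⟨hS.1, fun A hA => hS.2 A fun a ha b hb hab => hA a ha b hb (h hab)⟩

theorem Linked.reachable {G : SimpleGraph V} {S : Set V} (hS : Linked G S) {a b : V}
    (ha : a ∈ S) (hb : b ∈ S) : G.Reachable a b :=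
  hS.2 {b | G.Reachable a b} (fun _ _ _ _ hxy hx => Reachable.trans hx hxy.reachable)
    a ha b hb (Reachable.refl a)

theorem Linked.insert {G : SimpleGraph V} {S : Set V} (hS : Linked G S) {u v : V}
    (hu : u ∈ S) (huv : G.Adj v u) : Linked G (insert v S) := by
  refine ⟨⟨v, Or.inl rfl⟩, fun A hA a ha b hb haA => ?_⟩
  have key : ∀ A : Set V,
      (∀ a ∈ Insert.insert v S, ∀ b ∈ Insert.insert v S, G.Adj a b → a ∈ A → b ∈ A) →
      u ∈ A → ∀ b ∈ Insert.insert v S, b ∈ A := by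
    intro A hA huA b hb
    rcases hb with rfl | hb
    · exact hA u (Or.inr hu) _ (Or.inl rfl) huv.symm huA
    · exact hS.2 A (fun x hx y hy => hA x (Or.inr hx) y (Or.inr hy)) u hu b hb huA
  by_cases huA : u ∈ A
  · exact key A hA huA b hb
  · exact absurd haA (key Aᶜ (fun x hx y hy hxy hxA hyA => hxA (hA y hy x hx hxy.symm hyA))
      huA a ha)

/-- A nonempty vertex set that is not linked has a separation into two parts with no edge between
them. -/
theorem exists_sep {G : SimpleGraph V} {S : Set V} (hne : S.Nonempty) (h : ¬ Linked G S) :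
    ∃ A : Set V, (∀ a ∈ S, ∀ b ∈ S, G.Adj a b → (a ∈ A ↔ b ∈ A)) ∧
      (∃ a ∈ S, a ∈ A) ∧ ∃ b ∈ S, b ∉ A := by
  unfold Linked at h
  push Not at h
  obtain ⟨A, hA, a, ha, b, hb, haA, hbA⟩ := h hne
  exact ⟨A, fun x hx y hy hxy => ⟨hA x hx y hy hxy, hA y hy x hx hxy.symm⟩,
    ⟨a, ha, haA⟩, b, hb, hbA⟩

/-- If a linked set `S` meets both `A` and its complement, then some edge inside `S` leaves `A`. -/
theorem Linked.exists_adj {G : SimpleGraph V} {S : Set V} (hS : Linked G S) (A : Set V)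
    {a b : V} (ha : a ∈ S) (hb : b ∈ S) (haA : a ∈ A) (hbA : b ∉ A) :
    ∃ x ∈ S, ∃ y ∈ S, G.Adj x y ∧ x ∈ A ∧ y ∉ A := by
  by_contra hcon
  push Not at hcon
  exact hbA (hS.2 A hcon a ha b hb haA)

theorem TL.exists_ne {G : SimpleGraph V} {S : Set V} (hS : TL G S) (v : V) : ∃ u ∈ S, u ≠ v := by
  obtain ⟨x, hx⟩ := hS.1.1
  by_cases h : x = v
  · subst h
    obtain ⟨y, hy, hyx⟩ := (hS.2 x hx).1
    exact ⟨y, hy, hyx⟩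
  · exact ⟨x, hx, h⟩

theorem TL.exists_adj {G : SimpleGraph V} {S : Set V} (hS : TL G S) {v : V} (hv : v ∈ S) :
    ∃ u ∈ S, G.Adj v u := by
  obtain ⟨u, hu, huv⟩ := hS.exists_ne v
  obtain ⟨x, hx, y, hy, hxy, hxv, hyv⟩ := hS.1.exists_adj {v} hv hu rfl huv
  rw [Set.mem_singleton_iff] at hxv
  subst hxv
  exact ⟨y, hy, hxy⟩

end

/-! ### Good flats, deletion and contraction -/

section

variable {V : Type*}

theorem mem_edgesIn {G : SimpleGraph V} {S : Set V} {a b : V} :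
    s(a, b) ∈ edgesIn G S ↔ G.Adj a b ∧ a ∈ S ∧ b ∈ S := by
  simp [edgesIn]

theorem edgesIn_adj {G : SimpleGraph V} {S : Set V} {a b : V} :
    (fromEdgeSet (edgesIn G S)).Adj a b ↔ G.Adj a b ∧ a ∈ S ∧ b ∈ S := by
  rw [fromEdgeSet_adj, mem_edgesIn]
  exact ⟨fun h => h.1, fun h => ⟨h, h.1.ne⟩⟩

/-- If `G` is linked on `S`, so is the graph formed by the edges of `G` inside `S`. -/
theorem Linked.inside {G : SimpleGraph V} {S : Set V} (h : Linked G S) :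
    Linked (fromEdgeSet (edgesIn G S)) S :=
  ⟨h.1, fun A hA => h.2 A fun a ha b hb hab => hA a ha b hb (edgesIn_adj.2 ⟨hab, ha, hb⟩)⟩

theorem reachable_edgesIn {G : SimpleGraph V} {S : Set V} {a b : V}
    (h : (fromEdgeSet (edgesIn G S)).Reachable a b) : a = b ∨ (a ∈ S ∧ b ∈ S) := by
  obtain ⟨p⟩ := h
  induction p with
  | nil => exact Or.inl rfl
  | cons hadj p ih =>
    rw [edgesIn_adj] at hadj
    rcases ih with rfl | ih
    · exact Or.inr hadj.2
    · exact Or.inr ⟨hadj.2.1, ih.2⟩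

/-- A set of contracted vertices is linked if its preimage under the contraction is. -/
theorem linked_contract {G : SimpleGraph V} (F : Set (Sym2 V))
    (X : Set (fromEdgeSet F).ConnectedComponent)
    (h : Linked G ((fromEdgeSet F).connectedComponentMk ⁻¹' X)) :
    Linked (contractEdges G F) X := by
  obtain ⟨⟨v, hv⟩, h⟩ := h
  refine ⟨⟨_, hv⟩, fun A hA => ?_⟩
  rintro ⟨a⟩ ha ⟨b⟩ hb haA
  refine h ((fromEdgeSet F).connectedComponentMk ⁻¹' A) ?_ a ha b hb haA
  intro x hx y hy hxy hxA
  by_cases he : (fromEdgeSet F).connectedComponentMk x = (fromEdgeSet F).connectedComponentMk y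
  · rw [Set.mem_preimage, ← he]
    exact hxA
  · exact hA _ hx _ hy ⟨he, Or.inl ⟨x, y, hxy, rfl, rfl⟩⟩ hxA

/-- Contracting a connected vertex set `S` of a `2`-connected graph gives a `2`-connected graph
if and only if the complement of `S` is connected. -/
theorem twoConn_contract_iff {G : SimpleGraph V} {S : Set V} (hG : TL G Set.univ)
    (hS : Linked G S) :
    IsTwoConnected (contractEdges G (edgesIn G S)) ↔ Linked G Sᶜ := by
  rw [twoConn_iff]
  set J := fromEdgeSet (edgesIn G S) with hJ
  have hJS := hS.inside
  obtain ⟨s, hs⟩ := hS.1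
  have hinS : ∀ u ∈ S, J.connectedComponentMk u = J.connectedComponentMk s := fun u hu =>
    ConnectedComponent.sound (hJS.reachable hu hs)
  have hout : ∀ u v, u ∉ S → J.connectedComponentMk u = J.connectedComponentMk v → u = v := by
    intro u v hu huv
    rcases reachable_edgesIn (ConnectedComponent.exact huv) with h | h
    · exact h
    · exact absurd h.1 hu
  have hpre : J.connectedComponentMk ⁻¹' (Set.univ \ {J.connectedComponentMk s}) = Sᶜ := by
    ext u
    simp only [Set.mem_preimage, Set.mem_sdiff, Set.mem_univ, true_and, Set.mem_singleton_iff,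
      Set.mem_compl_iff]
    constructor
    · exact fun h hu => h (hinS u hu)
    · exact fun h hu => h (hout u s h hu ▸ hs)
  constructor
  · intro h
    have h2 := h.2 (J.connectedComponentMk s) trivial
    obtain ⟨⟨⟨c⟩, hc⟩, h2⟩ := h2
    refine ⟨⟨c, hpre ▸ hc⟩, fun A hA a ha b hb haA => ?_⟩
    have hmem : ∀ u ∈ Sᶜ, J.connectedComponentMk u ∈ Set.univ \ {J.connectedComponentMk s} :=
      fun u hu => by rw [← hpre] at hu; exact hu
    have := h2 (J.connectedComponentMk '' (A ∩ Sᶜ)) ?_ _ (hmem a ha) _ (hmem b hb)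
      ⟨a, ⟨haA, ha⟩, rfl⟩
    · obtain ⟨x, hx, hxb⟩ := this
      rw [← hout x b hx.2 hxb]
      exact hx.1
    · rintro c hc d hd ⟨-, hcd⟩ ⟨x, hx, rfl⟩
      have : ∃ u v, G.Adj u v ∧ J.connectedComponentMk u = J.connectedComponentMk x ∧
          J.connectedComponentMk v = d := by
        rcases hcd with ⟨u, v, huv, hu, hv⟩ | ⟨u, v, huv, hu, hv⟩
        · exact ⟨u, v, huv, hu, hv⟩
        · exact ⟨v, u, huv.symm, hv, hu⟩
      obtain ⟨u, v, huv, hu, rfl⟩ := this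
      obtain rfl := hout x u hx.2 hu.symm
      have hv : v ∈ Sᶜ := by rw [← hpre]; exact hd
      exact ⟨v, ⟨hA _ hx.2 _ hv huv hx.1, hv⟩, rfl⟩
  · intro h
    refine ⟨linked_contract _ _ hG.1, ?_⟩
    rintro ⟨c⟩ -
    apply linked_contract
    by_cases hc : c ∈ S
    · have : (Quot.mk _ c : J.ConnectedComponent) = J.connectedComponentMk s := hinS c hc
      rw [this, hpre]
      exact h
    · have : J.connectedComponentMk ⁻¹' (Set.univ \ {J.connectedComponentMk c}) =
          Set.univ \ {c} := by
        ext u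
        simp only [Set.mem_preimage, Set.mem_sdiff, Set.mem_univ, true_and, Set.mem_singleton_iff]
        rw [not_iff_not]
        exact ⟨fun h => (hout c u hc h.symm).symm, fun h => h ▸ rfl⟩
      have h3 := hG.2 c trivial
      rw [← this] at h3
      exact h3

/-- Good flats of a `2`-connected graph are the `2`-connected vertex sets with connected
complement. -/
theorem goodFlat_iff {G : SimpleGraph V} {S : Set V} (hG : TL G Set.univ) :
    IsGoodFlat G S ↔ TL G S ∧ Linked G Sᶜ := by
  unfold IsGoodFlat
  rw [twoConn_induce_iff]
  exact and_congr_right fun h => twoConn_contract_iff hG h.1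

theorem edgesIn_pair {G : SimpleGraph V} {a b : V} (hab : G.Adj a b) :
    edgesIn G {a, b} = {s(a, b)} := by
  ext e
  induction e with
  | h x y =>
    rw [mem_edgesIn]
    simp only [Set.mem_insert_iff, Set.mem_singleton_iff, Sym2.eq_iff]
    constructor
    · rintro ⟨h, rfl | rfl, rfl | rfl⟩ <;> simp_all
    · rintro (⟨rfl, rfl⟩ | ⟨rfl, rfl⟩)
      · exact ⟨hab, by simp, by simp⟩
      · exact ⟨hab.symm, by simp, by simp⟩

theorem linked_singleton (G : SimpleGraph V) (v : V) : Linked G {v} :=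
  ⟨⟨v, rfl⟩, fun A _ a ha b hb h => by
    rw [Set.mem_singleton_iff] at ha hb
    exact hb ▸ ha ▸ h⟩

theorem TL_pair {G : SimpleGraph V} {a b : V} (hab : G.Adj a b) : TL G {a, b} := by
  refine ⟨(linked_singleton G b).insert rfl hab, ?_⟩
  rintro v (rfl | rfl)
  · have : ({v, b} : Set V) \ {v} = {b} := by
      ext x
      have := hab.ne
      simp only [Set.mem_sdiff, Set.mem_insert_iff, Set.mem_singleton_iff]
      grind
    rw [this]
    exact linked_singleton G b
  · have : ({a, v} : Set V) \ {v} = {a} := by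
      ext x
      have := hab.ne
      simp only [Set.mem_sdiff, Set.mem_insert_iff, Set.mem_singleton_iff]
      grind
    rw [this]
    exact linked_singleton G a

/-- The graph `G/e` is `2`-connected if and only if the ends of `e` form a good flat. -/
theorem twoConn_contract_edge_iff {G : SimpleGraph V} {a b : V} (hG : TL G Set.univ)
    (hab : G.Adj a b) : IsTwoConnected (contractEdges G {s(a, b)}) ↔ IsGoodFlat G {a, b} := by
  rw [goodFlat_iff hG, ← edgesIn_pair hab, twoConn_contract_iff hG (TL_pair hab).1]
  exact ⟨fun h => ⟨TL_pair hab, h⟩, fun h => h.2⟩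

/-- If `A` is nonempty and its neighbours outside `A` are among the endpoints of the edge `ab`,
then deleting `ab` does not disconnect a vertex set containing `A`, `a` and `b`. -/
theorem linked_delete {G : SimpleGraph V} {a b : V} (hG : TL G Set.univ) (hab : G.Adj a b)
    {A U : Set V} (hA : A.Nonempty) (haA : a ∉ A) (hbA : b ∉ A)
    (hcl : ∀ x ∈ A, ∀ y, G.Adj x y → y ∈ A ∨ y = a ∨ y = b)
    (hAU : A ⊆ U) (haU : a ∈ U) (hbU : b ∈ U) (hU : Linked G U) :
    Linked (G.deleteEdges {s(a, b)}) U := by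
  -- it suffices to find a contradiction from a separation with `a` on one side, `b` on the other
  have key : ∀ X : Set V, (∀ x ∈ U, ∀ y ∈ U, (G.deleteEdges {s(a, b)}).Adj x y →
      (x ∈ X ↔ y ∈ X)) → a ∈ X → b ∉ X → False := by
    intro X hX haX hbX
    have hX' : ∀ x ∈ A, ∀ y ∈ U, G.Adj x y → (x ∈ X ↔ y ∈ X) := by
      intro x hx y hy hxy
      refine hX x (hAU hx) y hy ?_
      rw [deleteEdges_adj]
      refine ⟨hxy, fun h => ?_⟩
      rw [Set.mem_singleton_iff, Sym2.eq_iff] at h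
      rcases h with ⟨rfl, rfl⟩ | ⟨rfl, rfl⟩
      · exact haA hx
      · exact hbA hx
    obtain ⟨x, hx⟩ := hA
    by_cases hxX : x ∈ X
    · obtain ⟨y, hy, z, hz, hyz, hyA, hzA⟩ := (hG.2 a trivial).exists_adj (A ∩ X)
        (a := x) (b := b) ⟨trivial, fun h => haA (h ▸ hx)⟩ ⟨trivial, hab.ne'⟩ ⟨hx, hxX⟩
        (fun h => hbA h.1)
      have hzU : z ∈ U := by
        rcases hcl y hyA.1 z hyz with h | rfl | rfl
        exacts [hAU h, haU, hbU]
      have hzX := (hX' y hyA.1 z hzU hyz).1 hyA.2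
      rcases hcl y hyA.1 z hyz with h | rfl | rfl
      · exact hzA ⟨h, hzX⟩
      · exact hz.2 rfl
      · exact hbX hzX
    · obtain ⟨y, hy, z, hz, hyz, hyA, hzA⟩ := (hG.2 b trivial).exists_adj (A ∩ Xᶜ)
        (a := x) (b := a) ⟨trivial, fun h => hbA (h ▸ hx)⟩ ⟨trivial, hab.ne⟩ ⟨hx, hxX⟩
        (fun h => haA h.1)
      have hzU : z ∈ U := by
        rcases hcl y hyA.1 z hyz with h | rfl | rfl
        exacts [hAU h, haU, hbU]
      have hzX : z ∉ X := fun h => hyA.2 ((hX' y hyA.1 z hzU hyz).2 h)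
      rcases hcl y hyA.1 z hyz with h | rfl | rfl
      · exact hzA ⟨h, hzX⟩
      · exact hzX haX
      · exact hz.2 rfl
  by_contra hcon
  obtain ⟨X, hX, ⟨p, hp, hpX⟩, q, hq, hqX⟩ := exists_sep hU.1 hcon
  obtain ⟨x, hx, y, hy, hxy, hxX, hyX⟩ := hU.exists_adj X hp hq hpX hqX
  have hxy' : s(x, y) = s(a, b) := by
    by_contra hne
    exact hyX ((hX x hx y hy (by rw [deleteEdges_adj]; exact ⟨hxy, hne⟩)).1 hxX)
  rw [Sym2.eq_iff] at hxy'
  rcases hxy' with ⟨rfl, rfl⟩ | ⟨rfl, rfl⟩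
  · exact key X hX hxX hyX
  · exact key Xᶜ (fun x hx y hy h => not_congr (hX x hx y hy h)) hyX (fun h => h hxX)

/-- Every edge of a `2`-connected graph on at least three vertices can be deleted or contracted
without destroying `2`-connectivity. -/
theorem delete_or_contract {G : SimpleGraph V} (hG : TL G Set.univ) {a b : V} (hab : G.Adj a b)
    (h3 : ∃ c, c ≠ a ∧ c ≠ b) :
    TL (G.deleteEdges {s(a, b)}) Set.univ ∨ IsGoodFlat G {a, b} := by
  rw [goodFlat_iff hG]
  by_cases h : Linked G {a, b}ᶜ
  · exact Or.inr ⟨TL_pair hab, h⟩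
  left
  obtain ⟨c, hc⟩ := h3
  obtain ⟨A, hA, ⟨p, hp, hpA⟩, q, hq, hqA⟩ := exists_sep (S := {a, b}ᶜ) ⟨c, by simpa using hc⟩ h
  -- both sides of the separation avoid `a` and `b`
  have hmem : ∀ x : V, x ∈ ({a, b}ᶜ : Set V) ↔ x ≠ a ∧ x ≠ b := by simp
  have side : ∀ B : Set V, (∀ x ∈ ({a, b}ᶜ : Set V), ∀ y ∈ ({a, b}ᶜ : Set V), G.Adj x y →
      (x ∈ B ↔ y ∈ B)) → (∃ x ∈ ({a, b}ᶜ : Set V), x ∈ B) → ∀ U : Set V, B ∩ {a, b}ᶜ ⊆ U →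
      a ∈ U → b ∈ U → Linked G U → Linked (G.deleteEdges {s(a, b)}) U := by
    intro B hB ⟨x, hx, hxB⟩ U hBU ha hb hU
    refine linked_delete hG hab (A := B ∩ {a, b}ᶜ) ⟨x, hxB, hx⟩ (by simp) (by simp) ?_ hBU ha hb hU
    intro x hx y hxy
    by_cases hy : y ∈ ({a, b}ᶜ : Set V)
    · exact Or.inl ⟨(hB x hx.2 y hy hxy).1 hx.1, hy⟩
    · right
      rw [hmem] at hy
      tauto
  refine ⟨side A hA ⟨p, hp, hpA⟩ _ (Set.subset_univ _) trivial trivial hG.1, fun v _ => ?_⟩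
  have hv := hG.2 v trivial
  by_cases hva : v = a
  · refine ⟨hv.1, fun X hX => hv.2 X fun x hx y hy hxy => hX x hx y hy ?_⟩
    rw [deleteEdges_adj]
    refine ⟨hxy, fun h => ?_⟩
    rw [Set.mem_singleton_iff, Sym2.eq_iff] at h
    rcases h with ⟨rfl, rfl⟩ | ⟨rfl, rfl⟩
    · exact hx.2 hva.symm
    · exact hy.2 hva.symm
  by_cases hvb : v = b
  · refine ⟨hv.1, fun X hX => hv.2 X fun x hx y hy hxy => hX x hx y hy ?_⟩
    rw [deleteEdges_adj]
    refine ⟨hxy, fun h => ?_⟩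
    rw [Set.mem_singleton_iff, Sym2.eq_iff] at h
    rcases h with ⟨rfl, rfl⟩ | ⟨rfl, rfl⟩
    · exact hy.2 hvb.symm
    · exact hx.2 hvb.symm
  by_cases hvA : v ∈ A
  · refine side Aᶜ (fun x hx y hy h => not_congr (hA x hx y hy h)) ⟨q, hq, hqA⟩ _ ?_
      ⟨trivial, Ne.symm hva⟩ ⟨trivial, Ne.symm hvb⟩ hv
    exact fun x hx => ⟨trivial, fun h => hx.1 ((Set.mem_singleton_iff.1 h) ▸ hvA)⟩
  · refine side A hA ⟨p, hp, hpA⟩ _ ?_ ⟨trivial, Ne.symm hva⟩ ⟨trivial, Ne.symm hvb⟩ hv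
    exact fun x hx => ⟨trivial, fun h => hvA ((Set.mem_singleton_iff.1 h) ▸ hx.1)⟩

/-- Enlarging a `2`-connected vertex set `S` by a union of components of the complement keeps it
`2`-connected. -/
theorem TL.extend {G : SimpleGraph V} (hG : TL G Set.univ) {S A : Set V} (hS : TL G S)
    (hA : ∀ x ∈ Sᶜ, ∀ y ∈ Sᶜ, G.Adj x y → (x ∈ A ↔ y ∈ A)) : TL G (S ∪ (A ∩ Sᶜ)) := by
  have main : ∀ D : Set V, Linked G (S \ D) → Linked G (Set.univ \ D) →
      Linked G ((S ∪ (A ∩ Sᶜ)) \ D) := by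
    intro D hSD hGD
    obtain ⟨s, hs⟩ := hSD.1
    by_contra hcon
    obtain ⟨X, hX, ⟨p, hp, hpX⟩, q, hq, hqX⟩ := exists_sep (S := (S ∪ (A ∩ Sᶜ)) \ D)
      ⟨s, Or.inl hs.1, hs.2⟩ hcon
    have key : ∀ X : Set V, (∀ a ∈ (S ∪ (A ∩ Sᶜ)) \ D, ∀ b ∈ (S ∪ (A ∩ Sᶜ)) \ D, G.Adj a b →
        (a ∈ X ↔ b ∈ X)) → s ∈ X → ∀ q ∈ (S ∪ (A ∩ Sᶜ)) \ D, q ∉ X → False := by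
      intro X hX hsX q hq hqX
      have hSX : ∀ x ∈ S \ D, x ∈ X := fun x hx => hSD.2 X (fun a ha b hb hab =>
        (hX a ⟨Or.inl ha.1, ha.2⟩ b ⟨Or.inl hb.1, hb.2⟩ hab).1) s hs x hx hsX
      have hsY : s ∉ (Xᶜ ∩ (S ∪ (A ∩ Sᶜ))) := fun h => h.1 hsX
      obtain ⟨x, hx, y, hy, hxy, hxX, hyX⟩ := hGD.exists_adj (Xᶜ ∩ (S ∪ (A ∩ Sᶜ)))
        (a := q) (b := s) ⟨trivial, hq.2⟩ ⟨trivial, hs.2⟩ ⟨hqX, hq.1⟩ hsY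
      have hxS : x ∉ S := fun h => hxX.1 (hSX x ⟨h, hx.2⟩)
      have hxA : x ∈ A := by
        rcases hxX.2 with h | h
        · exact absurd h hxS
        · exact h.1
      have hyU : y ∈ S ∪ (A ∩ Sᶜ) := by
        by_cases hyS : y ∈ S
        · exact Or.inl hyS
        · exact Or.inr ⟨(hA x hxS y hyS hxy).1 hxA, hyS⟩
      exact hyX ⟨fun h => hxX.1 ((hX x ⟨hxX.2, hx.2⟩ y ⟨hyU, hy.2⟩ hxy).2 h), hyU⟩
    by_cases hsX : s ∈ X
    · exact key X hX hsX q hq hqX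
    · exact key Xᶜ (fun x hx y hy h => not_congr (hX x hx y hy h)) hsX p hp (fun h => h hpX)
  refine ⟨?_, fun v _ => ?_⟩
  · have := main ∅ (by simpa using hS.1) (by simpa using hG.1)
    simpa using this
  · refine main {v} ?_ (hG.2 v trivial)
    by_cases hv : v ∈ S
    · exact hS.2 v hv
    · rw [Set.sdiff_singleton_eq_self hv]
      exact hS.1

end

/-! ### Spanning trees and the base polytope -/

section

variable {V : Type*}

theorem edgesIn_eq_image (K : SimpleGraph V) (S : Set V) :
    edgesIn K S = Sym2.map Subtype.val '' (K.induce S).edgeSet := by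
  ext e
  constructor
  · induction e with
    | h x y =>
      rw [mem_edgesIn]
      rintro ⟨h, hx, hy⟩
      exact ⟨s(⟨x, hx⟩, ⟨y, hy⟩), h, rfl⟩
  · rintro ⟨e, he, rfl⟩
    induction e with
    | h x y => exact mem_edgesIn.2 ⟨he, x.2, y.2⟩

theorem ncard_edgesIn (K : SimpleGraph V) (S : Set V) :
    (edgesIn K S).ncard = Nat.card (K.induce S).edgeSet := by
  rw [edgesIn_eq_image, Set.ncard_image_of_injective _ (Sym2.map.injective Subtype.val_injective)]
  rfl

theorem Linked.le_ncard {K : SimpleGraph V} {S : Set V} (h : Linked K S) :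
    S.ncard ≤ (edgesIn K S).ncard + 1 := by
  rw [ncard_edgesIn]
  exact ((linked_iff K S).2 h).card_vert_le_card_edgeSet_add_one

theorem edgesIn_mono {K K' : SimpleGraph V} (h : K ≤ K') (S : Set V) :
    edgesIn K S ⊆ edgesIn K' S := fun _ he => ⟨edgeSet_mono h he.1, he.2⟩

theorem edgesIn_univ (K : SimpleGraph V) : edgesIn K Set.univ = K.edgeSet := by
  ext e
  simp [edgesIn]

theorem edgesIn_singleton (K : SimpleGraph V) (v : V) : edgesIn K {v} = ∅ := by
  ext e
  induction e with
  | h x y =>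
    rw [mem_edgesIn]
    simp only [Set.mem_singleton_iff, Set.mem_empty_iff_false, iff_false]
    rintro ⟨h, rfl, rfl⟩
    exact h.ne rfl

theorem edgesIn_empty (K : SimpleGraph V) : edgesIn K ∅ = ∅ := by
  ext e
  induction e with
  | h x y => simp [mem_edgesIn]

/-- A forest has at most `|S| - 1` edges inside a nonempty vertex set `S`. -/
theorem forest_bound [Finite V] {K : SimpleGraph V} (hK : K.IsAcyclic) {S : Set V}
    (hS : S.Nonempty) : (edgesIn K S).ncard + 1 ≤ S.ncard := by
  have : Nonempty S := hS.to_subtype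
  obtain ⟨T, hT, -, hT2⟩ := (connected_top (V := S)).exists_isTree_le_of_le_of_isAcyclic
    le_top (hK.induce S)
  have h1 := (isTree_iff_connected_and_card.1 hT2).2
  rw [ncard_edgesIn, ← Nat.card_coe_set_eq S, ← h1]
  exact Nat.add_le_add_right (Set.ncard_le_ncard (edgeSet_mono hT)) 1

theorem tree_ncard [Finite V] {T : SimpleGraph V} (hT : T.IsTree) :
    T.edgeSet.ncard + 1 = Nat.card V := (isTree_iff_connected_and_card.1 hT).2

/-- The bases of the graphic matroid of a connected graph are the edge sets of its spanning
trees. -/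
theorem basis_iff {G : SimpleGraph V} (hG : G.Connected) (B : Set (Sym2 V)) :
    IsGraphicBasis G B ↔ ∃ T ≤ G, T.IsTree ∧ B = T.edgeSet := by
  constructor
  · rintro ⟨⟨hBG, hB⟩, hmax⟩
    obtain ⟨T, hT, hTG, hT2⟩ := hG.exists_isTree_le_of_le_of_isAcyclic
      (G.fromEdgeSet_le.2 fun e he => hBG he.1) hB
    refine ⟨T, hTG, hT2, ?_⟩
    apply Set.Subset.antisymm
    · intro e he
      refine edgeSet_mono hT ?_
      rw [edgeSet_fromEdgeSet]
      exact ⟨he, fun h => G.not_isDiag_of_mem_edgeSet (hBG he) h⟩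
    · intro e he
      by_contra heB
      refine hmax e (edgeSet_mono hTG he) heB
        ⟨Set.insert_subset (edgeSet_mono hTG he) hBG, hT2.isAcyclic.anti ?_⟩
      rw [fromEdgeSet_le]
      rintro f ⟨rfl | hf, hfd⟩
      · exact he
      · refine edgeSet_mono hT ?_
        rw [edgeSet_fromEdgeSet]
        exact ⟨hf, hfd⟩
  · rintro ⟨T, hTG, hT, rfl⟩
    refine ⟨⟨edgeSet_mono hTG, by rw [fromEdgeSet_edgeSet]; exact hT.isAcyclic⟩, ?_⟩
    intro e he heT hcon
    induction e with
    | h u v =>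
      have h1 : (T ⊔ edge u v).IsAcyclic := by
        refine hcon.2.anti (sup_le ?_ ?_)
        · intro x y hxy
          rw [fromEdgeSet_adj]
          exact ⟨Or.inr hxy, hxy.ne⟩
        · exact fromEdgeSet_mono (by simp)
      rcases (isAcyclic_sup_fromEdgeSet_iff.1 h1).2 (hT.connected.preconnected u v) with h | h
      · exact G.ne_of_adj he h
      · exact heT h

/-- The indicator vector of the edge set of a graph. -/
noncomputable def ind (T : SimpleGraph V) : Sym2 V → ℝ := T.edgeSet.indicator fun _ => 1

open Classical in
theorem ind_apply (T : SimpleGraph V) (e : Sym2 V) : ind T e = if e ∈ T.edgeSet then 1 else 0 := by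
  rw [ind, Set.indicator_apply]

/-- The indicator vectors of the spanning trees of `G`: the vertices of the base polytope. -/
def treeSet (G : SimpleGraph V) : Set (Sym2 V → ℝ) := {x | ∃ T ≤ G, T.IsTree ∧ x = ind T}

theorem basePolytope_eq {G : SimpleGraph V} (hG : G.Connected) :
    basePolytope G = convexHull ℝ (treeSet G) := by
  unfold basePolytope treeSet
  congr 1
  ext x
  constructor
  · rintro ⟨B, hB, rfl⟩
    obtain ⟨T, h1, h2, rfl⟩ := (basis_iff hG B).1 hB
    exact ⟨T, h1, h2, rfl⟩
  · rintro ⟨T, h1, h2, rfl⟩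
    exact ⟨T.edgeSet, (basis_iff hG _).2 ⟨T, h1, h2, rfl⟩, rfl⟩

theorem connected_of_reach {T T' : SimpleGraph V} (hT : T.Connected)
    (h : ∀ x y, T.Adj x y → T'.Reachable x y) : T'.Connected := by
  have := hT.nonempty
  refine ⟨fun a b => ?_⟩
  obtain ⟨p⟩ := hT.preconnected a b
  induction p with
  | nil => exact Reachable.refl _
  | cons hadj p ih => exact (h _ _ hadj).trans ih

/-- Two edges at `v` whose other ends are joined by a forest `J` avoiding `v` can be exchanged:
some two spanning trees containing `J` differ only in these two edges. -/
theorem exists_swap [Finite V] [DecidableEq V] {H J : SimpleGraph V} (hH : H.Connected)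
    (hJH : J ≤ H) (hJ : J.IsAcyclic) {v u w : V} (hv : ∀ x, ¬ J.Adj v x) (huw : J.Reachable u w)
    (hvu : H.Adj v u) (hvw : H.Adj v w) (hne : u ≠ w) :
    ∃ T T' : SimpleGraph V, T ≤ H ∧ T' ≤ H ∧ T.IsTree ∧ T'.IsTree ∧ J ≤ T ∧ J ≤ T' ∧
      T.Adj v u ∧ T'.Adj v w ∧
      ind T - ind T' = Pi.single s(v, u) 1 - Pi.single s(v, w) 1 := by
  have hnr : ¬ J.Reachable v u := by
    rintro ⟨p⟩
    cases p with
    | nil => exact hvu.ne rfl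
    | cons h _ => exact hv _ h
  have hJ1 : (J ⊔ edge v u).IsAcyclic := hJ.sup_edge_of_not_reachable hnr
  have hJ1H : J ⊔ edge v u ≤ H := by
    refine sup_le hJH ?_
    rw [edge_le_iff]
    exact Or.inr hvu
  obtain ⟨T, hJT, hTH, hT⟩ := hH.exists_isTree_le_of_le_of_isAcyclic hJ1H hJ1
  have hTvu : T.Adj v u := hJT (Or.inr (by simp [edge_adj, hvu.ne]))
  have hTvw : ¬ T.Adj v w := by
    intro hcon
    have h1 : (J ⊔ edge v u ⊔ edge v w).IsAcyclic := by
      refine hT.isAcyclic.anti (sup_le hJT ?_)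
      rw [edge_le_iff]
      exact Or.inr hcon
    have h2 : (J ⊔ edge v u).Reachable v w :=
      (Adj.reachable (Or.inr (by simp [edge_adj, hvu.ne]))).trans (huw.mono le_sup_left)
    rcases (isAcyclic_sup_fromEdgeSet_iff.1 h1).2 h2 with h | h
    · exact hvw.ne h
    · rcases h with h | h
      · exact hv _ h
      · rw [edge_adj] at h
        rcases h with ⟨⟨-, h⟩ | ⟨h, h'⟩, -⟩
        · exact hne h.symm
        · exact hvu.ne h
  let T' := T.deleteEdges {s(v, u)} ⊔ edge v w
  have hJT' : J ≤ T' := by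
    intro x y hxy
    refine Or.inl ?_
    rw [deleteEdges_adj]
    refine ⟨hJT (Or.inl hxy), fun h => ?_⟩
    rw [Set.mem_singleton_iff, Sym2.eq_iff] at h
    rcases h with ⟨rfl, rfl⟩ | ⟨rfl, rfl⟩
    · exact hv _ hxy
    · exact hv _ hxy.symm
  have hT'vw : T'.Adj v w := Or.inr (by simp [edge_adj, hvw.ne])
  have hset : T'.edgeSet = insert s(v, w) (T.edgeSet \ {s(v, u)}) := by
    ext e
    induction e with
    | h x y =>
      simp only [T', mem_edgeSet, sup_adj, deleteEdges_adj, edge_adj, Set.mem_insert_iff,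
        Set.mem_sdiff, Set.mem_singleton_iff, Sym2.eq_iff]
      have := hvw.ne
      grind
  have hnevw : s(v, u) ≠ s(v, w) := by
    intro h
    rw [Sym2.eq_iff] at h
    rcases h with ⟨-, h⟩ | ⟨h, -⟩
    · exact hne h
    · exact hvw.ne h
  have hT' : T'.IsTree := by
    rw [isTree_iff_connected_and_card]
    have huv' : T'.Reachable v u := hT'vw.reachable.trans (huw.symm.mono hJT')
    constructor
    · refine connected_of_reach hT.connected fun x y hxy => ?_
      by_cases h : s(x, y) = s(v, u)
      · rw [Sym2.eq_iff] at h
        rcases h with ⟨rfl, rfl⟩ | ⟨rfl, rfl⟩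
        · exact huv'
        · exact huv'.symm
      · exact Adj.reachable (Or.inl (by rw [deleteEdges_adj]; exact ⟨hxy, h⟩))
    · rw [← (isTree_iff_connected_and_card.1 hT).2, Nat.add_right_cancel_iff]
      change T'.edgeSet.ncard = T.edgeSet.ncard
      rw [hset, Set.ncard_insert_of_notMem (fun h => hTvw h.1),
        Set.ncard_sdiff_singleton_add_one (show s(v, u) ∈ T.edgeSet from hTvu)]
  refine ⟨T, T', hTH, ?_, hT, hT', le_sup_left.trans hJT, hJT', hTvu, hT'vw, ?_⟩
  · refine sup_le ((deleteEdges_le _).trans hTH) ?_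
    rw [edge_le_iff]
    exact Or.inr hvw
  · ext e
    have h1 : s(v, u) ∈ T.edgeSet := hTvu
    have h2 : s(v, w) ∉ T.edgeSet := hTvw
    have hmem : e ∈ T'.edgeSet ↔ e = s(v, w) ∨ e ∈ T.edgeSet ∧ e ≠ s(v, u) := by
      rw [hset]
      rfl
    rw [Pi.sub_apply, Pi.sub_apply, Pi.single_apply, Pi.single_apply, ind_apply, ind_apply]
    by_cases h3 : e = s(v, u)
    · rw [if_pos (by rwa [h3]), if_neg (by rw [hmem]; simp [h3, hnevw]), if_pos h3,
        if_neg (by rwa [h3])]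
    · by_cases h4 : e = s(v, w)
      · rw [if_neg (by rwa [h4]), if_pos (by rw [hmem]; simp [h4]), if_neg h3, if_pos h4]
      · by_cases h5 : e ∈ T.edgeSet
        · rw [if_pos h5, if_pos (hmem.2 (Or.inr ⟨h5, h3⟩)), if_neg h3, if_neg h4]
          simp
        · rw [if_neg h5, if_neg (by rw [hmem]; simp [h4, h5]), if_neg h3, if_neg h4]

end

/-! ### Exchanges between spanning trees -/

section

variable {V : Type*}

/-- A transitive relation between edges holding for any two edges that share a vertex of a connected
set `R` holds between any two edges at vertices of `R`. The other ends of the edges are confined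
to a set `U ⊇ R`. -/
theorem Linked.propagate {K : SimpleGraph V} {R U : Set V} (hR : Linked K R) (hRU : R ⊆ U)
    {r : Sym2 V → Sym2 V → Prop} (htr : ∀ a b c, r a b → r b c → r a c)
    (hloc : ∀ v ∈ R, ∀ u ∈ U, ∀ w ∈ U, K.Adj v u → K.Adj v w → r s(v, u) s(v, w))
    {v u v' u' : V} (hv : v ∈ R) (hu : u ∈ U) (hvu : K.Adj v u) (hv' : v' ∈ R) (hu' : u' ∈ U)
    (hvu' : K.Adj v' u') : r s(v, u) s(v', u') := by
  refine hR.2 {x | ∀ y ∈ U, K.Adj x y → r s(v, u) s(x, y)} ?_ v hv v' hv' ?_ u' hu' hvu'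
  · intro a ha b hb hab hA y hy hby
    refine htr _ _ _ (hA b (hRU hb) hab) ?_
    rw [Sym2.eq_swap]
    exact hloc b hb a (hRU ha) y hy hab.symm hby
  · intro y hy hvy
    exact hloc v hv u hu y hy hvu hvy

theorem Linked.of_reachable {K : SimpleGraph V} {S : Set V} (hne : S.Nonempty)
    (hK : ∀ a b, K.Adj a b → a ∈ S ∧ b ∈ S) (h : ∀ a ∈ S, ∀ b ∈ S, K.Reachable a b) :
    Linked K S := by
  refine ⟨hne, fun A hA a ha b hb haA => ?_⟩
  obtain ⟨p⟩ := h a ha b hb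
  clear h
  induction p with
  | nil => exact haA
  | cons hadj p ih =>
    exact ih (hK _ _ hadj).2 hb (hA _ ha _ (hK _ _ hadj).2 hadj haA)

theorem Linked.exists_forest {K : SimpleGraph V} {S : Set V} (h : Linked K S) :
    ∃ J ≤ fromEdgeSet (edgesIn K S), J.IsAcyclic ∧
      J.Reachable = (fromEdgeSet (edgesIn K S)).Reachable ∧ Linked J S := by
  obtain ⟨J, hJ, hJ1, hJ2⟩ := (fromEdgeSet (edgesIn K S)).exists_isAcyclic_reachable_eq_le
  refine ⟨J, hJ, hJ1, hJ2, Linked.of_reachable h.1 ?_ ?_⟩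
  · intro a b hab
    exact (edgesIn_adj.1 (hJ hab)).2
  · intro a ha b hb
    rw [hJ2]
    exact h.inside.reachable ha hb

/-- The difference of two unit vectors, placed at height zero. -/
def dv [DecidableEq V] (a b : Sym2 V) : (Sym2 V → ℝ) × ℝ := (Pi.single a 1 - Pi.single b 1, 0)

theorem dv_self [DecidableEq V] (a : Sym2 V) : dv a a = 0 := by
  simp [dv]

theorem dv_add [DecidableEq V] (a b c : Sym2 V) : dv a b + dv b c = dv a c := by
  simp [dv]

theorem dv_mem_of_swap [DecidableEq V] {L : AddSubgroup ((Sym2 V → ℝ) × ℝ)}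
    {T T' : SimpleGraph V} (hT : (ind T, (1 : ℝ)) ∈ L) (hT' : (ind T', (1 : ℝ)) ∈ L)
    {a b : Sym2 V} (h : ind T - ind T' = Pi.single a 1 - Pi.single b 1) : dv a b ∈ L := by
  have := L.sub_mem hT hT'
  rw [Prod.mk_sub_mk, h, sub_self] at this
  exact this

/-- For two edges inside a `2`-connected set `S`, the difference of their unit vectors lies in every
group containing the spanning trees that are connected on `S`. At a vertex `v ∈ S` two edges are
exchanged along a spanning tree of the connected set `S \ {v}`. -/
theorem dv_mem_inside [Finite V] [DecidableEq V] {H : SimpleGraph V} {S : Set V}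
    (hH : H.Connected) (hS : TL H S) {L : AddSubgroup ((Sym2 V → ℝ) × ℝ)}
    (hL : ∀ T ≤ H, T.IsTree → Linked T S → (ind T, (1 : ℝ)) ∈ L)
    {a b : Sym2 V} (ha : a ∈ edgesIn H S) (hb : b ∈ edgesIn H S) : dv a b ∈ L := by
  induction a with
  | h v u =>
  induction b with
  | h v' u' =>
  rw [mem_edgesIn] at ha hb
  refine hS.1.propagate (r := fun a b => dv a b ∈ L) subset_rfl ?_ ?_ ha.2.1 ha.2.2 ha.1
    hb.2.1 hb.2.2 hb.1
  · intro a b c h1 h2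
    rw [← dv_add a b c]
    exact L.add_mem h1 h2
  · intro v hv u hu w hw hvu hvw
    by_cases hne : u = w
    · rw [hne, dv_self]
      exact L.zero_mem
    obtain ⟨J, hJ, hJ1, hJ2, hJ3⟩ := (hS.2 v hv).exists_forest
    have hJadj : ∀ {x y}, J.Adj x y → H.Adj x y ∧ x ∈ S \ {v} ∧ y ∈ S \ {v} :=
      fun h => edgesIn_adj.1 (hJ h)
    have huS : u ∈ S \ {v} := ⟨hu, hvu.ne'⟩
    have hwS : w ∈ S \ {v} := ⟨hw, hvw.ne'⟩
    obtain ⟨T, T', h1, h2, h3, h4, h5, h6, h7, h8, h9⟩ :=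
      exists_swap hH (fun x y h => (hJadj h).1) hJ1 (v := v) (fun x h => (hJadj h).2.1.2 rfl)
        (hJ3.reachable huS hwS) hvu hvw hne
    have hins : insert v (S \ {v}) = S := Set.insert_sdiff_self_of_mem hv
    refine dv_mem_of_swap (hL T h1 h3 ?_) (hL T' h2 h4 ?_) h9
    · rw [← hins]
      exact (hJ3.mono h5).insert huS h7
    · rw [← hins]
      exact (hJ3.mono h6).insert hwS h8

/-- For two edges not inside a connected set `S` with connected complement, the difference of their
unit vectors lies in every group containing the spanning trees that are connected on `S`. -/
theorem dv_mem_outside [Finite V] [DecidableEq V] {G : SimpleGraph V} {S : Set V}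
    (hG : TL G Set.univ) (hS : Linked G S) (hSc : Linked G Sᶜ)
    {L : AddSubgroup ((Sym2 V → ℝ) × ℝ)}
    (hL : ∀ T ≤ G, T.IsTree → Linked T S → (ind T, (1 : ℝ)) ∈ L)
    {a b : Sym2 V} (ha : a ∈ G.edgeSet) (haS : a ∉ edgesIn G S) (hb : b ∈ G.edgeSet)
    (hbS : b ∉ edgesIn G S) : dv a b ∈ L := by
  have hend : ∀ a ∈ G.edgeSet, a ∉ edgesIn G S → ∃ v u, v ∉ S ∧ G.Adj v u ∧ a = s(v, u) := by
    intro a ha haS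
    induction a with
    | h v u =>
      rw [mem_edgesIn] at haS
      by_cases hv : v ∈ S
      · exact ⟨u, v, fun hu => haS ⟨ha, hv, hu⟩, Adj.symm (show G.Adj v u from ha), Sym2.eq_swap⟩
      · exact ⟨v, u, hv, ha, rfl⟩
  obtain ⟨v, u, hv, hvu, rfl⟩ := hend a ha haS
  obtain ⟨v', u', hv', hvu', rfl⟩ := hend b hb hbS
  refine hSc.propagate (r := fun a b => dv a b ∈ L) (Set.subset_univ _) ?_ ?_ hv trivial hvu
    hv' trivial hvu'
  · intro a b c h1 h2
    rw [← dv_add a b c]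
    exact L.add_mem h1 h2
  · intro v hv u _ w _ hvu hvw
    by_cases hne : u = w
    · rw [hne, dv_self]
      exact L.zero_mem
    obtain ⟨J₀, hJ₀, hJ₀1, -, hJ₀3⟩ := hS.exists_forest
    have hle : J₀ ≤ fromEdgeSet (edgesIn G (Set.univ \ {v})) := by
      intro x y h
      obtain ⟨h1, h2, h3⟩ := edgesIn_adj.1 (hJ₀ h)
      refine edgesIn_adj.2 ⟨h1, ⟨trivial, ?_⟩, ⟨trivial, ?_⟩⟩
      · rintro rfl
        exact hv h2
      · rintro rfl
        exact hv h3
    obtain ⟨J, hJJ, hJ, hJ1, hJ2⟩ :=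
      exists_isAcyclic_reachable_eq_le_of_le_of_isAcyclic hle hJ₀1
    have hJadj : ∀ {x y}, J.Adj x y → G.Adj x y ∧ x ∈ Set.univ \ {v} ∧ y ∈ Set.univ \ {v} :=
      fun h => edgesIn_adj.1 (hJ h)
    have hr : J.Reachable u w := by
      rw [hJ2]
      exact (hG.2 v trivial).inside.reachable ⟨trivial, hvu.ne'⟩ ⟨trivial, hvw.ne'⟩
    obtain ⟨T, T', h1, h2, h3, h4, h5, h6, h7, h8, h9⟩ :=
      exists_swap ((linked_univ_iff G).2 hG.1) (fun x y h => (hJadj h).1) hJ1 (v := v)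
        (fun x h => (hJadj h).2.1.2 rfl) hr hvu hvw hne
    exact dv_mem_of_swap (hL T h1 h3 (hJ₀3.mono (hJJ.trans h5)))
      (hL T' h2 h4 (hJ₀3.mono (hJJ.trans h6))) h9

end

/-! ### Rank forms of vertex sets -/

section

variable {V : Type*}

set_option linter.unusedSectionVars false

theorem edgesIn_inf (T G : SimpleGraph V) (S : Set V) :
    T.edgeSet ∩ edgesIn G S = edgesIn (T ⊓ G) S := by
  ext e
  simp only [edgesIn, edgeSet_inf, Set.mem_inter_iff, Set.mem_ofPred_eq, and_assoc]

variable [Fintype V] [DecidableEq V]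

/-- The linear form `(x, t) ↦ k t - x(D)`. -/
noncomputable def gD (k : ℝ) (D : Set (Sym2 V)) : ((Sym2 V → ℝ) × ℝ) →ₗ[ℝ] ℝ where
  toFun y := k * y.2 - ∑ e, D.indicator y.1 e
  map_add' x y := by
    simp only [Prod.snd_add, Prod.fst_add, Set.indicator_add', Pi.add_apply,
      Finset.sum_add_distrib]
    ring
  map_smul' c y := by
    have h : ∀ e, D.indicator (c • y.1) e = c * D.indicator y.1 e := fun e => by
      by_cases he : e ∈ D <;> simp [he]
    simp only [Prod.smul_snd, Prod.smul_fst, smul_eq_mul, RingHom.id_apply, mul_sub,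
      Finset.mul_sum, h]
    ring

theorem gD_apply (k : ℝ) (D : Set (Sym2 V)) (x : Sym2 V → ℝ) (t : ℝ) :
    gD k D (x, t) = k * t - ∑ e, D.indicator x e := rfl

theorem sum_indicator_one (X : Set (Sym2 V)) :
    ∑ e, X.indicator (fun _ => (1 : ℝ)) e = X.ncard := by
  classical
  rw [Set.ncard_eq_toFinset_card', ← Set.filter_mem_univ_eq_toFinset, Finset.card_filter]
  simp [Set.indicator_apply]

theorem gD_tree (k : ℝ) (D : Set (Sym2 V)) (T : SimpleGraph V) :
    gD k D (ind T, 1) = k - (T.edgeSet ∩ D).ncard := by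
  rw [gD_apply, ind, Set.indicator_indicator, sum_indicator_one, Set.inter_comm, mul_one]

open Classical in
theorem gD_dv (k : ℝ) (D : Set (Sym2 V)) (a b : Sym2 V) :
    gD k D (dv a b) = (if b ∈ D then 1 else 0) - (if a ∈ D then 1 else 0) := by
  have h : ∀ a : Sym2 V, ∑ e, D.indicator (Pi.single a (1 : ℝ)) e = if a ∈ D then 1 else 0 := by
    intro a
    rw [Finset.sum_eq_single a]
    · simp [Set.indicator_apply]
    · intro b _ hb
      simp [Set.indicator_apply, hb]
    · simp
  rw [dv, gD_apply, Set.indicator_sub']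
  simp only [Pi.sub_apply, Finset.sum_sub_distrib, h]
  ring

/-- The form `(|S| - 1) t - x(E(S))` whose nonnegativity is the rank inequality of `S`. -/
noncomputable def fS (G : SimpleGraph V) (S : Set V) : ((Sym2 V → ℝ) × ℝ) →ₗ[ℝ] ℝ :=
  gD ((S.ncard : ℝ) - 1) (edgesIn G S)

theorem fS_tree (G T : SimpleGraph V) (S : Set V) :
    fS G S (ind T, 1) = S.ncard - 1 - (edgesIn (T ⊓ G) S).ncard := by
  rw [fS, gD_tree, edgesIn_inf]

theorem fS_tree_of_le {G T : SimpleGraph V} (h : T ≤ G) (S : Set V) :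
    fS G S (ind T, 1) = S.ncard - 1 - (edgesIn T S).ncard := by
  rw [fS_tree, inf_eq_left.2 h]

theorem fS_tree_nonneg (G : SimpleGraph V) {T : SimpleGraph V} (hT : T.IsAcyclic) {S : Set V}
    (hS : S.Nonempty) : 0 ≤ fS G S (ind T, 1) := by
  rw [fS_tree]
  have := forest_bound (hT.anti (inf_le_left : T ⊓ G ≤ T)) hS
  have : ((edgesIn (T ⊓ G) S).ncard : ℝ) + 1 ≤ S.ncard := by exact_mod_cast this
  linarith

theorem fS_tree_eq_zero {G T : SimpleGraph V} (h : T ≤ G) (hT : T.IsAcyclic) {S : Set V}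
    (hS : Linked T S) : fS G S (ind T, 1) = 0 := by
  apply le_antisymm _ (fS_tree_nonneg G hT hS.1)
  rw [fS_tree_of_le h]
  have : (S.ncard : ℝ) ≤ (edgesIn T S).ncard + 1 := by exact_mod_cast hS.le_ncard
  linarith

theorem fS_singleton (G : SimpleGraph V) (v : V) : fS G {v} = 0 := by
  ext y
  all_goals simp [fS, gD_apply, edgesIn_singleton]

theorem fS_empty (G : SimpleGraph V) (x : Sym2 V → ℝ) (t : ℝ) : fS G ∅ (x, t) = -t := by
  simp [fS, gD_apply, edgesIn_empty]

/-- The rank forms are modular on pairs of vertex sets with no edge between `X \ Y` and `Y \ X`. -/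
theorem fS_modular (G : SimpleGraph V) (X Y : Set V)
    (h : ∀ x ∈ X, ∀ y ∈ Y, G.Adj x y → x ∈ Y ∨ y ∈ X) (p : (Sym2 V → ℝ) × ℝ) :
    fS G X p + fS G Y p = fS G (X ∪ Y) p + fS G (X ∩ Y) p := by
  obtain ⟨x, t⟩ := p
  simp only [fS, gD_apply]
  have h1 : (X.ncard : ℝ) + Y.ncard = (X ∪ Y).ncard + (X ∩ Y).ncard := by
    exact_mod_cast (Set.ncard_union_add_ncard_inter X Y).symm
  have h2 : ∑ e, (edgesIn G X).indicator x e + ∑ e, (edgesIn G Y).indicator x e =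
      ∑ e, (edgesIn G (X ∪ Y)).indicator x e + ∑ e, (edgesIn G (X ∩ Y)).indicator x e := by
    classical
    rw [← Finset.sum_add_distrib, ← Finset.sum_add_distrib]
    refine Finset.sum_congr rfl fun e _ => ?_
    induction e with
    | h a b =>
      simp only [Set.indicator_apply, mem_edgesIn, Set.mem_union, Set.mem_inter_iff]
      by_cases hab : G.Adj a b
      · have h3 := h a
        have h4 := h b
        have h5 := hab.symm
        by_cases a ∈ X <;> by_cases b ∈ X <;> by_cases a ∈ Y <;> by_cases b ∈ Y <;> simp_all
      · simp [hab]
  linear_combination t * h1 - h2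

end

/-! ### The cone over the base polytope and its lattice -/

section

variable {V : Type*}

set_option linter.unusedSectionVars false

theorem finrank_inf_ker {M : Type*} [AddCommGroup M] [Module ℝ M] [FiniteDimensional ℝ M]
    (W : Submodule ℝ M) (f : M →ₗ[ℝ] ℝ) (hf : ∃ y ∈ W, f y ≠ 0) :
    Module.finrank ℝ ↥(W ⊓ LinearMap.ker f) + 1 = Module.finrank ℝ W := by
  have h1 := (f.domRestrict W).finrank_range_add_finrank_ker
  have h2 : LinearMap.range (f.domRestrict W) = ⊤ := by
    rw [LinearMap.range_eq_top]
    refine LinearMap.surjective fun h => ?_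
    obtain ⟨y, hy, hy'⟩ := hf
    exact hy' (LinearMap.congr_fun h ⟨y, hy⟩)
  have h3 : Submodule.map W.subtype (LinearMap.ker (f.domRestrict W)) = W ⊓ LinearMap.ker f := by
    ext y
    simp only [Submodule.mem_map, LinearMap.mem_ker, Submodule.mem_inf]
    constructor
    · rintro ⟨z, hz, rfl⟩
      exact ⟨z.2, hz⟩
    · rintro ⟨h, h'⟩
      exact ⟨⟨y, h⟩, h', rfl⟩
  rw [← h3, LinearEquiv.finrank_eq (Submodule.equivMapOfInjective W.subtype
    W.subtype_injective (LinearMap.ker (f.domRestrict W))).symm, ← h1, h2]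
  simp [add_comm]

/-- The generators of the cone over the base polytope, one for each spanning tree. -/
def coneGen (G : SimpleGraph V) : Set ((Sym2 V → ℝ) × ℝ) :=
  {y | ∃ T ≤ G, T.IsTree ∧ y = (ind T, 1)}

variable [Fintype V] [DecidableEq V] {G : SimpleGraph V}

theorem ind_mem (hG : G.Connected) {T : SimpleGraph V} (hT : T ≤ G) (hT' : T.IsTree) :
    ind T ∈ basePolytope G := by
  rw [basePolytope_eq hG]
  exact subset_convexHull ℝ _ ⟨T, hT, hT', rfl⟩

theorem ind_mem_cone (hG : G.Connected) {T : SimpleGraph V} (hT : T ≤ G) (hT' : T.IsTree) :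
    (ind T, (1 : ℝ)) ∈ coneOver (basePolytope G) :=
  ⟨1, ind T, ind_mem hG hT hT', zero_le_one, by rw [one_smul]⟩

theorem polytope_induction (hG : G.Connected) {C : Set (Sym2 V → ℝ)} (hC : Convex ℝ C)
    (h : ∀ T ≤ G, T.IsTree → ind T ∈ C) : basePolytope G ⊆ C := by
  rw [basePolytope_eq hG]
  refine convexHull_min ?_ hC
  rintro x ⟨T, h1, h2, rfl⟩
  exact h T h1 h2

theorem cone_nonneg (hG : G.Connected) {h : ((Sym2 V → ℝ) × ℝ) →ₗ[ℝ] ℝ}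
    (hh : ∀ T ≤ G, T.IsTree → 0 ≤ h (ind T, 1)) :
    ∀ y ∈ coneOver (basePolytope G), 0 ≤ h y := by
  rintro y ⟨t, p, hp, ht, rfl⟩
  have h1 : ∀ p ∈ basePolytope G, 0 ≤ h (p, 1) := by
    refine polytope_induction hG (C := {p | 0 ≤ h (p, 1)}) ?_ hh
    intro p hp q hq a b ha hb hab
    have : (a • p + b • q, (1 : ℝ)) = a • (p, (1 : ℝ)) + b • (q, (1 : ℝ)) := by
      ext1
      · simp
      · simp [hab]
    rw [Set.mem_ofPred_eq, this, map_add, map_smul, map_smul]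
    exact add_nonneg (mul_nonneg ha hp) (mul_nonneg hb hq)
  have : (t • p, t) = t • (p, (1 : ℝ)) := by ext1 <;> simp
  rw [this, map_smul]
  exact mul_nonneg ht (h1 p hp)

/-- The linear span of the cone over the base polytope. -/
noncomputable def Wsp (G : SimpleGraph V) : Submodule ℝ ((Sym2 V → ℝ) × ℝ) :=
  Submodule.span ℝ (coneOver (basePolytope G))

theorem polytope_mem_of_gen (hG : G.Connected) {M : Submodule ℝ ((Sym2 V → ℝ) × ℝ)}
    (hM : ∀ T ≤ G, T.IsTree → (ind T, (1 : ℝ)) ∈ M) {p : Sym2 V → ℝ}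
    (hp : p ∈ basePolytope G) : (p, (1 : ℝ)) ∈ M := by
  refine polytope_induction hG (C := {p | (p, (1 : ℝ)) ∈ M}) ?_ hM hp
  intro p hp q hq a b ha hb hab
  have : (a • p + b • q, (1 : ℝ)) = a • (p, (1 : ℝ)) + b • (q, (1 : ℝ)) := by
    ext1
    · simp
    · simp [hab]
  rw [Set.mem_ofPred_eq, this]
  exact M.add_mem (M.smul_mem _ hp) (M.smul_mem _ hq)

theorem Wsp_le (hG : G.Connected) {M : Submodule ℝ ((Sym2 V → ℝ) × ℝ)}
    (hM : ∀ T ≤ G, T.IsTree → (ind T, (1 : ℝ)) ∈ M) : Wsp G ≤ M := by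
  refine Submodule.span_le.2 ?_
  rintro y ⟨t, p, hp, ht, rfl⟩
  have : (t • p, t) = t • (p, (1 : ℝ)) := by ext1 <;> simp
  rw [this]
  exact M.smul_mem _ (polytope_mem_of_gen hG hM hp)

theorem ind_mem_Wsp (hG : G.Connected) {T : SimpleGraph V} (hT : T ≤ G) (hT' : T.IsTree) :
    (ind T, (1 : ℝ)) ∈ Wsp G := Submodule.subset_span (ind_mem_cone hG hT hT')

theorem isLatticePoint_ind (T : SimpleGraph V) : IsLatticePoint (ind T) := by
  classical
  intro e
  rw [ind_apply]
  split_ifs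
  · exact ⟨1, by simp⟩
  · exact ⟨0, by simp⟩

theorem ind_mem_lattice (hG : G.Connected) {T : SimpleGraph V} (hT : T ≤ G) (hT' : T.IsTree) :
    (ind T, (1 : ℝ)) ∈ coneLattice (basePolytope G) :=
  Submodule.subset_span ⟨ind T, ind_mem hG hT hT', isLatticePoint_ind T, rfl⟩

theorem lattice_mem_Wsp {y : (Sym2 V → ℝ) × ℝ} (hy : y ∈ coneLattice (basePolytope G)) :
    y ∈ Wsp G := by
  have h : coneLattice (basePolytope G) ≤ (Wsp G).restrictScalars ℤ := by
    refine Submodule.span_le.2 ?_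
    rintro y ⟨p, hp, -, rfl⟩
    exact Submodule.subset_span ⟨1, p, hp, zero_le_one, by rw [one_smul]⟩
  exact h hy

/-- Elements of the lattice have integer coordinates. -/
theorem lattice_int {y : (Sym2 V → ℝ) × ℝ} (hy : y ∈ coneLattice (basePolytope G)) :
    (∀ e, ∃ z : ℤ, y.1 e = z) ∧ ∃ z : ℤ, y.2 = z := by
  induction hy using Submodule.span_induction with
  | mem y h =>
    obtain ⟨p, -, hp, rfl⟩ := h
    exact ⟨hp, 1, by simp⟩
  | zero => exact ⟨fun e => ⟨0, by simp⟩, 0, by simp⟩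
  | add x y _ _ hx hy =>
    constructor
    · intro e
      obtain ⟨a, ha⟩ := hx.1 e
      obtain ⟨b, hb⟩ := hy.1 e
      exact ⟨a + b, by simp [ha, hb]⟩
    · obtain ⟨a, ha⟩ := hx.2
      obtain ⟨b, hb⟩ := hy.2
      exact ⟨a + b, by simp [ha, hb]⟩
  | smul c y _ hy =>
    constructor
    · intro e
      obtain ⟨b, hb⟩ := hy.1 e
      exact ⟨c * b, by simp [hb]⟩
    · obtain ⟨b, hb⟩ := hy.2
      exact ⟨c * b, by simp [hb]⟩

theorem gD_int {k : ℝ} (hk : ∃ z : ℤ, k = z) (D : Set (Sym2 V)) {y : (Sym2 V → ℝ) × ℝ}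
    (hy : (∀ e, ∃ z : ℤ, y.1 e = z) ∧ ∃ z : ℤ, y.2 = z) : ∃ z : ℤ, gD k D y = z := by
  classical
  obtain ⟨h1, t, ht⟩ := hy
  choose x hx using h1
  obtain ⟨k, rfl⟩ := hk
  refine ⟨k * t - ∑ e, D.indicator x e, ?_⟩
  obtain ⟨y1, y2⟩ := y
  replace ht : y2 = t := ht
  rw [gD_apply, Int.cast_sub, Int.cast_mul, Int.cast_sum, ht]
  congr 1
  refine Finset.sum_congr rfl fun e _ => ?_
  rw [Set.indicator_apply, Set.indicator_apply]
  split_ifs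
  · exact hx e
  · simp

theorem fS_int (G' : SimpleGraph V) (S : Set V) {y : (Sym2 V → ℝ) × ℝ}
    (hy : y ∈ coneLattice (basePolytope G)) : ∃ z : ℤ, fS G' S y = z :=
  gD_int ⟨S.ncard - 1, by simp⟩ _ (lattice_int hy)

theorem fS_univ_Wsp (hG : G.Connected) {y : (Sym2 V → ℝ) × ℝ} (hy : y ∈ Wsp G) :
    fS G Set.univ y = 0 := by
  have h : Wsp G ≤ LinearMap.ker (fS G Set.univ) :=
    Wsp_le hG fun T hT hT' =>
      fS_tree_eq_zero hT hT'.isAcyclic ((linked_univ_iff T).1 hT'.connected)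
  exact h hy

theorem supp_Wsp (hG : G.Connected) {y : (Sym2 V → ℝ) × ℝ} (hy : y ∈ Wsp G) {e : Sym2 V}
    (he : e ∉ G.edgeSet) : y.1 e = 0 := by
  classical
  have h : Wsp G ≤ LinearMap.ker ((LinearMap.proj e).comp (LinearMap.fst ℝ (Sym2 V → ℝ) ℝ)) := by
    refine Wsp_le hG fun T hT hT' => ?_
    rw [LinearMap.mem_ker]
    change ind T e = 0
    rw [ind_apply, if_neg fun h => he (edgeSet_mono hT h)]
  exact h hy

/-- A criterion for the form `k t - x(D)` to define a facet: the span of the spanning trees on which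
the form vanishes contains the differences of unit vectors of any two edges in `D`, and of any two
edges outside `D`. Together with a single difference `dv a₀ b₀` across `D` it then spans the
whole space. -/
theorem facet_of (hG : G.Connected) {k : ℝ} {D : Set (Sym2 V)}
    (hpos : ∀ T ≤ G, T.IsTree → 0 ≤ gD k D (ind T, 1))
    {L : Submodule ℝ ((Sym2 V → ℝ) × ℝ)}
    (hL : L = Submodule.span ℝ {y | ∃ T ≤ G, T.IsTree ∧ gD k D (ind T, 1) = 0 ∧ y = (ind T, 1)})
    {T₀ : SimpleGraph V} (hT₀ : T₀ ≤ G) (hT₀' : T₀.IsTree) (hT₀D : gD k D (ind T₀, 1) = 0)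
    (hin : ∀ a ∈ D, ∀ b ∈ D, dv a b ∈ L)
    (hout : ∀ a ∈ G.edgeSet, a ∉ D → ∀ b ∈ G.edgeSet, b ∉ D → dv a b ∈ L)
    {a₀ b₀ : Sym2 V} (ha₀ : a₀ ∈ G.edgeSet) (haD : a₀ ∉ D) (hbD : b₀ ∈ D)
    (hab : dv a₀ b₀ ∈ Wsp G) :
    IsFacetForm (basePolytope G) (gD k D) := by
  classical
  have hcone := cone_nonneg hG hpos
  refine ⟨hcone, ?_⟩
  have hne : gD k D (dv a₀ b₀) ≠ 0 := by
    rw [gD_dv, if_pos hbD, if_neg haD]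
    norm_num
  rw [show Submodule.span ℝ (coneOver (basePolytope G)) = Wsp G from rfl,
    ← finrank_inf_ker (Wsp G) (gD k D) ⟨_, hab, hne⟩]
  have hLle : L ≤ Submodule.span ℝ {y ∈ coneOver (basePolytope G) | gD k D y = 0} := by
    rw [hL]
    refine Submodule.span_mono ?_
    rintro y ⟨T, h1, h2, h3, rfl⟩
    exact ⟨ind_mem_cone hG h1 h2, h3⟩
  suffices h : Submodule.span ℝ {y ∈ coneOver (basePolytope G) | gD k D y = 0} =
      Wsp G ⊓ LinearMap.ker (gD k D) by rw [h]
  apply le_antisymm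
  · refine Submodule.span_le.2 ?_
    rintro y ⟨h1, h2⟩
    exact ⟨Submodule.subset_span h1, h2⟩
  · rintro y ⟨hy, hy'⟩
    refine hLle ?_
    have hT₀L : (ind T₀, (1 : ℝ)) ∈ L := by
      rw [hL]
      exact Submodule.subset_span ⟨T₀, hT₀, hT₀', hT₀D, rfl⟩
    set z := y - y.2 • (ind T₀, (1 : ℝ)) with hz
    have hzW : z ∈ Wsp G := (Wsp G).sub_mem hy ((Wsp G).smul_mem _ (ind_mem_Wsp hG hT₀ hT₀'))
    have hz2 : z.2 = 0 := by simp [hz]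
    have hzD : gD k D z = 0 := by
      rw [hz, map_sub, map_smul, hT₀D, show gD k D y = 0 from hy']
      simp
    have h1 : ∑ e, D.indicator z.1 e = 0 := by
      have : gD k D (z.1, z.2) = 0 := hzD
      rw [gD_apply, hz2] at this
      linarith
    have h2 : ∑ e, z.1 e = 0 := by
      have : fS G Set.univ (z.1, z.2) = 0 := fS_univ_Wsp hG hzW
      rw [fS, gD_apply, hz2, edgesIn_univ] at this
      rw [← neg_eq_zero, ← this, mul_zero, zero_sub]
      congr 1
      refine Finset.sum_congr rfl fun e _ => ?_
      rw [Set.indicator_apply]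
      split_ifs with h
      · rfl
      · exact supp_Wsp hG hzW h
    have hzL : z = ∑ e, z.1 e • (if e ∈ D then dv e b₀ else dv e a₀) := by
      ext1
      · ext e
        rw [Prod.fst_sum, Finset.sum_apply]
        have h3 : ∀ f, (z.1 f • (if f ∈ D then dv f b₀ else dv f a₀)).1 e =
            z.1 f * (Pi.single f (1 : ℝ) : Sym2 V → ℝ) e -
              (D.indicator z.1 f * (Pi.single b₀ (1 : ℝ) : Sym2 V → ℝ) e +
              (z.1 f - D.indicator z.1 f) * (Pi.single a₀ (1 : ℝ) : Sym2 V → ℝ) e) := by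
          intro f
          by_cases hf : f ∈ D
          · simp [hf, dv, mul_sub]
          · simp [hf, dv, mul_sub]
        simp only [h3, Finset.sum_sub_distrib, Finset.sum_add_distrib, ← Finset.sum_mul, h1, h2]
        simp [Pi.single_apply]
      · rw [Prod.snd_sum, hz2]
        refine (Finset.sum_eq_zero fun e _ => ?_).symm
        split_ifs <;> simp [dv]
    have hy2 : y = z + y.2 • (ind T₀, (1 : ℝ)) := by simp [hz]
    rw [hy2]
    refine L.add_mem ?_ (L.smul_mem _ hT₀L)
    rw [hzL]
    refine L.sum_mem fun e _ => ?_
    by_cases he : e ∈ D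
    · rw [if_pos he]
      exact L.smul_mem _ (hin e he b₀ hbD)
    · rw [if_neg he]
      by_cases heG : e ∈ G.edgeSet
      · exact L.smul_mem _ (hout e heG he a₀ ha₀ haD)
      · rw [supp_Wsp hG hzW heG, zero_smul]
        exact L.zero_mem

/-- A linear form that vanishes on every spanning tree lying on a facet is proportional to the
form defining the facet. -/
theorem proportional (hG : G.Connected) {h g : ((Sym2 V → ℝ) × ℝ) →ₗ[ℝ] ℝ}
    (hh : IsFacetForm (basePolytope G) h)
    (hg : ∀ T ≤ G, T.IsTree → h (ind T, 1) = 0 → g (ind T, 1) = 0) :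
    ∃ α : ℝ, ∀ y ∈ Wsp G, g y = α * h y := by
  obtain ⟨hpos, hrank⟩ := hh
  have hpos' : ∀ T ≤ G, T.IsTree → 0 ≤ h (ind T, 1) :=
    fun T h1 h2 => hpos _ (ind_mem_cone hG h1 h2)
  obtain ⟨K, hK⟩ : ∃ K : ℝ, ∀ T ≤ G, T.IsTree → |g (ind T, 1)| ≤ K * h (ind T, 1) := by
    obtain ⟨K, hK⟩ := (Set.finite_range
      fun T : SimpleGraph V => |g (ind T, 1)| / h (ind T, 1)).bddAbove
    refine ⟨K, fun T h1 h2 => ?_⟩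
    rcases (hpos' T h1 h2).eq_or_lt with h0 | h0
    · rw [← h0, hg T h1 h2 h0.symm]
      simp
    · rw [← div_le_iff₀ h0]
      exact hK ⟨T, rfl⟩
  have hg0 : ∀ y ∈ coneOver (basePolytope G), h y = 0 → g y = 0 := by
    intro y hy hy0
    have h1 := cone_nonneg hG (h := K • h - g) (fun T h1 h2 => by
      have := hK T h1 h2
      simp only [LinearMap.sub_apply, LinearMap.smul_apply, smul_eq_mul]
      linarith [le_abs_self (g (ind T, 1))]) y hy
    have h2 := cone_nonneg hG (h := K • h + g) (fun T h1 h2 => by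
      have := hK T h1 h2
      simp only [LinearMap.add_apply, LinearMap.smul_apply, smul_eq_mul]
      linarith [neg_abs_le (g (ind T, 1))]) y hy
    simp only [LinearMap.add_apply, LinearMap.sub_apply, LinearMap.smul_apply, hy0] at h1 h2
    simp at h1 h2
    linarith
  change _ = Module.finrank ℝ (Wsp G) at hrank
  set Z := Submodule.span ℝ {y ∈ coneOver (basePolytope G) | h y = 0} with hZ
  have hZg : Z ≤ LinearMap.ker g := Submodule.span_le.2 fun y hy => hg0 y hy.1 hy.2
  have hZle : Z ≤ Wsp G ⊓ LinearMap.ker h :=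
    Submodule.span_le.2 fun y hy => ⟨Submodule.subset_span hy.1, hy.2⟩
  have hne : ∃ y ∈ Wsp G, h y ≠ 0 := by
    by_contra! hcon
    have : Wsp G ≤ Z := Submodule.span_le.2 fun y hy =>
      Submodule.subset_span ⟨hy, hcon y (Submodule.subset_span hy)⟩
    have := Submodule.finrank_mono this
    omega
  have heq : Z = Wsp G ⊓ LinearMap.ker h := by
    refine Submodule.eq_of_le_of_finrank_eq hZle ?_
    have := finrank_inf_ker (Wsp G) h hne
    omega
  obtain ⟨y₀, hy₀, hy₀'⟩ := hne
  refine ⟨g y₀ / h y₀, fun y hy => ?_⟩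
  have h1 : y - (h y / h y₀) • y₀ ∈ Z := by
    rw [heq]
    refine ⟨(Wsp G).sub_mem hy ((Wsp G).smul_mem _ hy₀), ?_⟩
    change h (y - (h y / h y₀) • y₀) = 0
    rw [map_sub, map_smul, smul_eq_mul, div_mul_cancel₀ _ hy₀', sub_self]
  have h2 := hZg h1
  rw [LinearMap.mem_ker, map_sub, map_smul, smul_eq_mul] at h2
  field_simp
  field_simp at h2
  linarith

/-- A facet form does not vanish on every spanning tree. -/
theorem facet_ne (hG : G.Connected) {h : ((Sym2 V → ℝ) × ℝ) →ₗ[ℝ] ℝ}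
    (hh : IsFacetForm (basePolytope G) h) :
    ∃ T ≤ G, T.IsTree ∧ h (ind T, 1) ≠ 0 := by
  by_contra! hcon
  obtain ⟨hpos, hrank⟩ := hh
  have h0 : Wsp G ≤ LinearMap.ker h := Wsp_le hG hcon
  have : {y ∈ coneOver (basePolytope G) | h y = 0} = coneOver (basePolytope G) :=
    Set.Subset.antisymm (fun y hy => hy.1)
      fun y hy => ⟨hy, h0 (Submodule.subset_span hy)⟩
  rw [this] at hrank
  omega

end

/-! ### Facets from good flats and from deletions; necessity -/

section

variable {V : Type*} [Fintype V] [DecidableEq V] {G : SimpleGraph V}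

set_option linter.unusedSectionVars false

theorem TL.connected (hG : TL G Set.univ) : G.Connected := (linked_univ_iff G).2 hG.1

/-- Differences of unit vectors of edges of a `2`-connected graph lie in the lattice. -/
theorem dv_mem_lattice (hG : TL G Set.univ) {a b : Sym2 V} (ha : a ∈ G.edgeSet)
    (hb : b ∈ G.edgeSet) : dv a b ∈ coneLattice (basePolytope G) := by
  have := dv_mem_inside hG.connected hG (L := (coneLattice (basePolytope G)).toAddSubgroup)
    (fun T h1 h2 _ => ind_mem_lattice hG.connected h1 h2) (a := a) (b := b)
  rw [edgesIn_univ] at this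
  exact this ha hb

/-- For a connected vertex set some spanning tree is connected on it, so that its rank form vanishes
there. -/
theorem exists_tight (hG : G.Connected) {S : Set V} (hS : Linked G S) :
    ∃ T ≤ G, T.IsTree ∧ Linked T S := by
  obtain ⟨J, hJ, hJ1, -, hJ3⟩ := hS.exists_forest
  obtain ⟨T, h1, h2, h3⟩ := hG.exists_isTree_le_of_le_of_isAcyclic
    (fun x y h => (edgesIn_adj.1 (hJ h)).1) hJ1
  exact ⟨T, h2, h3, hJ3.mono h1⟩

theorem isReduced_fS (G' : SimpleGraph V) (S : Set V) {y : (Sym2 V → ℝ) × ℝ}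
    (hy : y ∈ coneLattice (basePolytope G)) (h : fS G' S y = 1) :
    IsReducedForm (basePolytope G) (fS G' S) :=
  ⟨fun _ hz => fS_int G' S hz, y, hy, h⟩

theorem fS_dv_eq_one {G' : SimpleGraph V} {S : Set V} {a b : Sym2 V} (ha : a ∉ edgesIn G' S)
    (hb : b ∈ edgesIn G' S) : fS G' S (dv a b) = 1 := by
  rw [fS, gD_dv, if_pos hb, if_neg ha, sub_zero]

theorem exists_edge_out (hG : TL G Set.univ) {S : Set V} (hS : Sᶜ.Nonempty) :
    ∃ a ∈ G.edgeSet, a ∉ edgesIn G S := by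
  obtain ⟨v, hv⟩ := hS
  obtain ⟨u, -, hu⟩ := hG.exists_adj (v := v) trivial
  exact ⟨s(v, u), hu, fun h => hv (mem_edgesIn.1 h).2.1⟩

theorem TL.exists_edge {S : Set V} (hS : TL G S) : ∃ b, b ∈ edgesIn G S := by
  obtain ⟨v, hv⟩ := hS.1.1
  obtain ⟨u, hu, hvu⟩ := hS.exists_adj hv
  exact ⟨s(v, u), mem_edgesIn.2 ⟨hvu, hv, hu⟩⟩

/-- A good flat gives a facet, with a reduced equation. -/
theorem facet_good (hG : TL G Set.univ) {S : Set V} (hS : TL G S) (hSc : Linked G Sᶜ) :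
    IsFacetForm (basePolytope G) (fS G S) ∧ IsReducedForm (basePolytope G) (fS G S) := by
  obtain ⟨a₀, ha₀, ha₀S⟩ := exists_edge_out hG hSc.1
  obtain ⟨b₀, hb₀⟩ := hS.exists_edge
  have hd := dv_mem_lattice hG ha₀ hb₀.1
  refine ⟨?_, isReduced_fS _ _ hd (fS_dv_eq_one ha₀S hb₀)⟩
  obtain ⟨T₀, h1, h2, h3⟩ := exists_tight hG.connected hS.1
  set L : Submodule ℝ ((Sym2 V → ℝ) × ℝ) := Submodule.span ℝ {y | ∃ T ≤ G, T.IsTree ∧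
    gD ((S.ncard : ℝ) - 1) (edgesIn G S) (ind T, 1) = 0 ∧ y = (ind T, (1 : ℝ))} with hL
  have hLT : ∀ T ≤ G, T.IsTree → Linked T S → (ind T, (1 : ℝ)) ∈ L.toAddSubgroup :=
    fun T h1 h2 h3 => Submodule.subset_span ⟨T, h1, h2, fS_tree_eq_zero h1 h2.isAcyclic h3, rfl⟩
  refine facet_of hG.connected (fun T _ h2 => fS_tree_nonneg G h2.isAcyclic hS.1.1) hL h1 h2
    (fS_tree_eq_zero h1 h2.isAcyclic h3) ?_ ?_ ha₀ ha₀S hb₀ (lattice_mem_Wsp hd)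
  · intro a ha b hb
    exact dv_mem_inside hG.connected hS hLT ha hb
  · intro a ha haS b hb hbS
    exact dv_mem_outside hG hS.1 hSc hLT ha haS hb hbS

/-- An edge whose deletion leaves a `2`-connected graph gives a facet, with a reduced equation. -/
theorem facet_del (hG : TL G Set.univ) {e : Sym2 V} (he : e ∈ G.edgeSet)
    (hd : TL (G.deleteEdges {e}) Set.univ) :
    IsFacetForm (basePolytope G) (fS (G.deleteEdges {e}) Set.univ) ∧
      IsReducedForm (basePolytope G) (fS (G.deleteEdges {e}) Set.univ) := by
  have hle : G.deleteEdges {e} ≤ G := deleteEdges_le _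
  have heD : e ∉ edgesIn (G.deleteEdges {e}) Set.univ := by
    rw [edgesIn_univ, edgeSet_deleteEdges]
    exact fun h => h.2 rfl
  obtain ⟨b₀, hb₀⟩ := hd.exists_edge
  have hdv := dv_mem_lattice hG he (edgesIn_mono hle _ hb₀).1
  refine ⟨?_, isReduced_fS _ _ hdv (fS_dv_eq_one heD hb₀)⟩
  obtain ⟨T₀, h1, h2, h3⟩ := exists_tight hd.connected hd.1
  set L : Submodule ℝ ((Sym2 V → ℝ) × ℝ) := Submodule.span ℝ {y | ∃ T ≤ G, T.IsTree ∧
    gD (((Set.univ : Set V).ncard : ℝ) - 1) (edgesIn (G.deleteEdges {e}) Set.univ) (ind T, 1) = 0 ∧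
      y = (ind T, (1 : ℝ))} with hL
  refine facet_of hG.connected (fun T _ h2 => fS_tree_nonneg _ h2.isAcyclic hd.1.1) hL
    (h1.trans hle) h2 (fS_tree_eq_zero h1 h2.isAcyclic h3) ?_ ?_ he heD hb₀ (lattice_mem_Wsp hdv)
  · intro a ha b hb
    refine dv_mem_inside hd.connected hd (L := L.toAddSubgroup) ?_ ha hb
    intro T h1 h2 h3
    exact Submodule.subset_span
      ⟨T, h1.trans hle, h2, fS_tree_eq_zero h1 h2.isAcyclic h3, rfl⟩
  · have : ∀ a ∈ G.edgeSet, a ∉ edgesIn (G.deleteEdges {e}) Set.univ → a = e := by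
      intro a ha haD
      by_contra hne
      rw [edgesIn_univ, edgeSet_deleteEdges] at haD
      exact haD ⟨ha, hne⟩
    intro a ha haD b hb hbD
    rw [this a ha haD, this b hb hbD, dv_self]
    exact L.zero_mem

theorem cast_finsum (w : Sym2 V → ℕ) (X : Set (Sym2 V)) :
    ((∑ᶠ e ∈ X, w e : ℕ) : ℝ) = ∑ e, X.indicator (fun e => (w e : ℝ)) e := by
  classical
  rw [finsum_mem_def, finsum_eq_sum_of_fintype, Nat.cast_sum]
  refine Finset.sum_congr rfl fun e _ => ?_
  rw [Set.indicator_apply, Set.indicator_apply]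
  split_ifs <;> simp

/-- The value `k` of the rank form of `S` at `(w, δ)` as an equation of natural numbers. The
subtraction `S.ncard - 1` does not truncate, as `S` is nonempty. -/
theorem fS_eq_iff (w : Sym2 V → ℕ) {v : Sym2 V → ℝ} (hv : ∀ e ∈ G.edgeSet, v e = w e) (δ k : ℕ)
    {S : Set V} (hS : S.Nonempty) :
    fS G S (v, (δ : ℝ)) = k ↔ (∑ᶠ e ∈ edgesIn G S, w e) + k = δ * (S.ncard - 1) := by
  have h1 : 1 ≤ S.ncard := hS.ncard_pos
  have h2 : ∑ e, (edgesIn G S).indicator v e =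
      ∑ e, (edgesIn G S).indicator (fun e => (w e : ℝ)) e := by
    refine Finset.sum_congr rfl fun e _ => ?_
    by_cases he : e ∈ edgesIn G S
    · simp [he, hv e he.1]
    · simp [he]
  rw [fS, gD_apply, h2, ← cast_finsum, ← Nat.cast_inj (R := ℝ)]
  push_cast [Nat.cast_sub h1]
  constructor
  · intro h
    linarith
  · intro h
    linarith

/-- The rank form of all vertices for `G∖e` exceeds that for `G` by the coordinate of `e`; on the
span of the cone it therefore equals this coordinate. -/
theorem fS_delete {e : Sym2 V} (he : e ∈ G.edgeSet) (x : Sym2 V → ℝ) (t : ℝ) :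
    fS (G.deleteEdges {e}) Set.univ (x, t) = fS G Set.univ (x, t) + x e := by
  classical
  rw [fS, fS, gD_apply, gD_apply, edgesIn_univ, edgesIn_univ, edgeSet_deleteEdges]
  have : ∑ f, G.edgeSet.indicator x f = ∑ f, (G.edgeSet \ {e}).indicator x f + x e := by
    have h1 : x e = ∑ f, if f = e then x e else 0 := by simp
    rw [h1, ← Finset.sum_add_distrib]
    refine Finset.sum_congr rfl fun f _ => ?_
    by_cases hf : f = e
    · subst hf
      simp [he]
    · simp [Set.indicator_apply, hf]
  rw [this]
  ring

theorem tree_unique {a b : V} (hab : G.Adj a b) (h : ∀ c, c = a ∨ c = b) {T : SimpleGraph V}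
    (hTG : T ≤ G) (hT : T.IsTree) : T = G := by
  obtain ⟨x, -, y, -, hxy, rfl, hy⟩ := ((linked_univ_iff T).1 hT.connected).exists_adj {a}
    (a := a) (b := b) trivial trivial rfl hab.ne'
  have hyb : y = b := (h y).resolve_left hy
  subst hyb
  refine le_antisymm hTG fun u v huv => ?_
  rcases h u with rfl | rfl <;> rcases h v with rfl | rfl
  · exact (huv.ne rfl).elim
  · exact hxy
  · exact hxy.symm
  · exact (huv.ne rfl).elim

/-- For a single edge the polytope is a point, and the height is a reduced facet equation. -/
theorem facet_snd (hG : G.Connected) {T₀ : SimpleGraph V} (hT₀ : T₀ ≤ G) (hT₀' : T₀.IsTree)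
    (hu : ∀ T ≤ G, T.IsTree → T = T₀) :
    IsFacetForm (basePolytope G) (LinearMap.snd ℝ (Sym2 V → ℝ) ℝ) ∧
      IsReducedForm (basePolytope G) (LinearMap.snd ℝ (Sym2 V → ℝ) ℝ) := by
  refine ⟨⟨?_, ?_⟩, fun y hy => (lattice_int hy).2, _, ind_mem_lattice hG hT₀ hT₀', rfl⟩
  · rintro y ⟨t, p, -, ht, rfl⟩
    exact ht
  · have h1 : Submodule.span ℝ (coneOver (basePolytope G)) = ℝ ∙ (ind T₀, (1 : ℝ)) := by
      apply le_antisymm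
      · refine Wsp_le hG fun T h1 h2 => ?_
        rw [hu T h1 h2]
        exact Submodule.mem_span_singleton_self _
      · rw [Submodule.span_singleton_le_iff_mem]
        exact ind_mem_Wsp hG hT₀ hT₀'
    have h2 : Submodule.span ℝ {y ∈ coneOver (basePolytope G) |
        (LinearMap.snd ℝ (Sym2 V → ℝ) ℝ) y = 0} = ⊥ := by
      rw [Submodule.span_eq_bot]
      rintro y ⟨⟨t, p, -, -, rfl⟩, h⟩
      replace h : t = 0 := h
      simp [h]
    have h3 : ((ind T₀, (1 : ℝ)) : (Sym2 V → ℝ) × ℝ) ≠ 0 := fun h => by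
      simpa using congrArg Prod.snd h
    rw [h2, h1, finrank_span_singleton h3]
    simp

/-- The coordinates of the Gorenstein point are the required weights. -/
theorem spade_of_gorenstein (δ : ℕ) (h2c : IsTwoConnected G)
    (h : IsDeltaGorenstein (basePolytope G) δ) : ∃ w : Sym2 V → ℕ, SatisfiesSpade G δ w := by
  have hG := (twoConn_iff G).1 h2c
  have hGc := hG.connected
  obtain ⟨v, hvP, hvL, hv⟩ := h
  have hpos : ∀ e, 0 ≤ v e := by
    obtain ⟨p, hp, rfl⟩ := hvP
    have : basePolytope G ⊆ {p | ∀ e, 0 ≤ p e} := by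
      refine polytope_induction hGc ?_ ?_
      · intro p hp q hq a b ha hb _ e
        exact add_nonneg (mul_nonneg ha (hp e)) (mul_nonneg hb (hq e))
      · intro T _ _ e
        exact Set.indicator_nonneg (fun _ _ => zero_le_one) e
    intro e
    exact mul_nonneg (Nat.cast_nonneg _) (this hp e)
  have hnat : ∀ e, ∃ n : ℕ, v e = n := by
    intro e
    obtain ⟨z, hz⟩ := (lattice_int hvL).1 e
    replace hz : v e = z := hz
    have h0 : 0 ≤ z := by
      have := hpos e
      rw [hz] at this
      exact_mod_cast this
    refine ⟨z.toNat, ?_⟩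
    rw [hz]
    exact_mod_cast (Int.toNat_of_nonneg h0).symm
  choose w hw using hnat
  have huniv : fS G Set.univ (v, (δ : ℝ)) = 0 := fS_univ_Wsp hGc (lattice_mem_Wsp hvL)
  have htot : (∑ᶠ e ∈ G.edgeSet, w e) = δ * (Nat.card V - 1) := by
    have := (fS_eq_iff w (fun e _ => hw e) δ 0 hG.1.1).1 (by rw [huniv]; simp)
    rwa [edgesIn_univ, add_zero, Set.ncard_univ] at this
  have hflat : ∀ S : Set V, IsGoodFlat G S →
      (∑ᶠ e ∈ edgesIn G S, w e) + 1 = δ * (S.ncard - 1) := by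
    intro S hS
    obtain ⟨h1, h2⟩ := (goodFlat_iff hG).1 hS
    obtain ⟨h3, h4⟩ := facet_good hG h1 h2
    refine (fS_eq_iff w (fun e _ => hw e) δ 1 h1.1.1).1 ?_
    rw [hv _ h3 h4, Nat.cast_one]
  have hpair : ∀ a b, G.Adj a b → IsGoodFlat G {a, b} → w s(a, b) = δ - 1 := by
    intro a b hab hS
    have := hflat _ hS
    rw [edgesIn_pair hab, finsum_mem_singleton, Set.ncard_pair hab.ne] at this
    omega
  have hdel : ∀ e ∈ G.edgeSet, TL (G.deleteEdges {e}) Set.univ → w e = 1 := by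
    intro e he hd
    obtain ⟨h3, h4⟩ := facet_del hG he hd
    have := hv _ h3 h4
    rw [fS_delete he, huniv, zero_add, hw] at this
    exact_mod_cast this
  refine ⟨w, h2c, ⟨?_, ?_, ?_⟩, htot, hflat⟩
  · intro e he
    induction e with
    | h a b =>
    have hab : G.Adj a b := he
    by_cases h3 : ∃ c, c ≠ a ∧ c ≠ b
    · rcases delete_or_contract hG hab h3 with h | h
      · exact Or.inl (hdel _ he h)
      · exact Or.inr (hpair a b hab h)
    · have h3' : ∀ c, c = a ∨ c = b := by
        intro c
        by_contra hc
        push Not at hc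
        exact h3 ⟨c, hc⟩
      obtain ⟨T₀, hT₀, hT₀'⟩ := hGc.exists_isTree_le
      obtain ⟨h4, h5⟩ := facet_snd hGc hT₀ hT₀' fun T h1 h2 =>
        (tree_unique hab h3' h1 h2).trans (tree_unique hab h3' hT₀ hT₀').symm
      have hδ : (δ : ℝ) = 1 := hv _ h4 h5
      have hδ' : δ = 1 := by exact_mod_cast hδ
      have hu : ({a, b} : Set V) = Set.univ := by
        ext c
        simpa using h3' c
      rw [← edgesIn_univ, ← hu, edgesIn_pair hab, finsum_mem_singleton, ← Set.ncard_univ, ← hu,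
        Set.ncard_pair hab.ne, hδ'] at htot
      exact Or.inl htot
  · intro e he hd
    exact hdel e he ((twoConn_iff _).1 hd)
  · intro e he hc
    induction e with
    | h a b => exact hpair a b he ((twoConn_contract_edge_iff hG he).1 hc)

end

/-! ### Uncrossing -/

section

variable {V : Type*} [Fintype V] [DecidableEq V] {G : SimpleGraph V}

set_option linter.unusedSectionVars false

/-- A connected induced subgraph with a cutvertex `v` splits at `v` into two parts, each of them
containing an edge. -/
theorem exists_split {S : Set V} (hS : Linked G S) (hn : ¬ TL G S) (h1 : ∀ v, S ≠ {v}) :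
    ∃ (v : V) (X Y : Set V) (a b : Sym2 V), X ∪ Y = S ∧ X ∩ Y = {v} ∧
      (∀ x ∈ X, ∀ y ∈ Y, G.Adj x y → x ∈ Y ∨ y ∈ X) ∧ X.ncard < S.ncard ∧ Y.ncard < S.ncard ∧
      a ∈ edgesIn G X ∧ a ∉ edgesIn G Y ∧ b ∈ edgesIn G Y ∧ b ∉ edgesIn G X := by
  obtain ⟨v, hv, hvn⟩ : ∃ v ∈ S, ¬ Linked G (S \ {v}) := by
    by_contra! hcon
    exact hn ⟨hS, hcon⟩
  have hne : (S \ {v}).Nonempty := by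
    by_contra hcon
    rw [Set.not_nonempty_iff_eq_empty, Set.sdiff_eq_empty] at hcon
    exact h1 v (hcon.antisymm (by simpa using hv))
  obtain ⟨A, hA, ⟨p, hp, hpA⟩, q, hq, hqA⟩ := exists_sep hne hvn
  have edge : ∀ B : Set V, (∀ a ∈ S \ {v}, ∀ b ∈ S \ {v}, G.Adj a b → (a ∈ B ↔ b ∈ B)) →
      (∃ p ∈ S \ {v}, p ∈ B) → ∃ x, (x ∈ S \ {v} ∧ x ∈ B) ∧ G.Adj x v := by
    rintro B hB ⟨p, hp, hpB⟩
    obtain ⟨x, hx, y, hy, hxy, hx1, hy1⟩ := hS.exists_adj ((S \ {v}) ∩ B) hp.1 hv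
      ⟨hp, hpB⟩ (fun h => h.1.2 rfl)
    refine ⟨x, hx1, ?_⟩
    by_cases hyv : y = v
    · exact hyv ▸ hxy
    · exact (hy1 ⟨⟨hy, hyv⟩, (hB x hx1.1 y ⟨hy, hyv⟩ hxy).1 hx1.2⟩).elim
  obtain ⟨x, hx, hxv⟩ := edge A hA ⟨p, hp, hpA⟩
  obtain ⟨y, hy, hyv⟩ := edge Aᶜ (fun a ha b hb hab => not_congr (hA a ha b hb hab)) ⟨q, hq, hqA⟩
  have hmemX : ∀ z, z ∈ insert v ((S \ {v}) ∩ A) ↔ z = v ∨ (z ∈ S ∧ z ≠ v) ∧ z ∈ A :=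
    fun z => Iff.rfl
  have hmemY : ∀ z, z ∈ insert v ((S \ {v}) ∩ Aᶜ) ↔ z = v ∨ (z ∈ S ∧ z ≠ v) ∧ z ∉ A :=
    fun z => Iff.rfl
  refine ⟨v, insert v ((S \ {v}) ∩ A), insert v ((S \ {v}) ∩ Aᶜ), s(x, v), s(y, v),
    ?_, ?_, ?_, ?_, ?_, ?_, ?_, ?_, ?_⟩
  · ext z
    rw [Set.mem_union, hmemX, hmemY]
    constructor
    · rintro ((rfl | h) | (rfl | h))
      exacts [hv, h.1.1, hv, h.1.1]
    · intro hz
      tauto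
  · ext z
    rw [Set.mem_inter_iff, hmemX, hmemY, Set.mem_singleton_iff]
    tauto
  · intro z hz t ht hzt
    rw [hmemX] at hz ⊢
    rw [hmemY] at ht ⊢
    rcases hz with rfl | hz
    · exact Or.inl (Or.inl rfl)
    · rcases ht with rfl | ht
      · exact Or.inr (Or.inl rfl)
      · exact (ht.2 ((hA z hz.1 t ht.1 hzt).1 hz.2)).elim
  · refine Set.ncard_lt_ncard ⟨?_, fun h => ?_⟩
    · rintro z (rfl | hz)
      exacts [hv, hz.1.1]
    · rcases h hq.1 with h | h
      exacts [hq.2 h, hqA h.2]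
  · refine Set.ncard_lt_ncard ⟨?_, fun h => ?_⟩
    · rintro z (rfl | hz)
      exacts [hv, hz.1.1]
    · rcases h hp.1 with h | h
      exacts [hp.2 h, h.2 hpA]
  · exact mem_edgesIn.2 ⟨hxv, Or.inr hx, Or.inl rfl⟩
  · rw [mem_edgesIn]
    rintro ⟨-, h | h, -⟩
    exacts [hx.1.2 h, h.2 hx.2]
  · exact mem_edgesIn.2 ⟨hyv, Or.inr hy, Or.inl rfl⟩
  · rw [mem_edgesIn]
    rintro ⟨-, h | h, -⟩
    exacts [hy.1.2 h, hy.2 h.2]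

/-- If the complement of `S` is disconnected then `S` is the intersection of two larger sets
covering all vertices, whose rank forms add up to those of `S` and of the set of all vertices. -/
theorem exists_cosplit {S : Set V} (hne : Sᶜ.Nonempty) (hS : ¬ Linked G Sᶜ) :
    ∃ A : Set V, (∀ x ∈ Sᶜ, ∀ y ∈ Sᶜ, G.Adj x y → (x ∈ A ↔ y ∈ A)) ∧
      (∃ a ∈ Sᶜ, a ∈ A) ∧ (∃ b ∈ Sᶜ, b ∉ A) ∧
      ∀ p, fS G (S ∪ (A ∩ Sᶜ)) p + fS G (S ∪ (Aᶜ ∩ Sᶜ)) p = fS G Set.univ p + fS G S p := by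
  obtain ⟨A, hA, ha, hb⟩ := exists_sep hne hS
  refine ⟨A, hA, ha, hb, fun p => ?_⟩
  have h1 : S ∪ (A ∩ Sᶜ) ∪ (S ∪ (Aᶜ ∩ Sᶜ)) = Set.univ := by
    ext z
    simp
    tauto
  have h2 : (S ∪ (A ∩ Sᶜ)) ∩ (S ∪ (Aᶜ ∩ Sᶜ)) = S := by
    ext z
    simp
    tauto
  rw [fS_modular, h1, h2]
  rintro x (hx | hx) y hy hxy
  · exact Or.inl (Or.inl hx)
  · rcases hy with hy | hy
    · exact Or.inr (Or.inl hy)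
    · exact (hy.1 ((hA x hx.2 y hy.2 hxy).1 hx.1)).elim

/-- The rank inequalities for good flats imply those for all `2`-connected vertex sets: if the
complement of `S` is disconnected, the rank form of `S` is a sum of those of two larger
`2`-connected sets. -/
theorem fS_nonneg_of_TL (hG : TL G Set.univ) {p : (Sym2 V → ℝ) × ℝ}
    (h0 : fS G Set.univ p = 0) (h1 : ∀ S, TL G S → Linked G Sᶜ → 0 ≤ fS G S p) (S : Set V)
    (hS : TL G S) : 0 ≤ fS G S p := by
  induction hn : Sᶜ.ncard using Nat.strong_induction_on generalizing S with
  | h n ih =>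
    by_cases hne : Sᶜ.Nonempty
    swap
    · rw [Set.not_nonempty_iff_eq_empty, Set.compl_empty_iff] at hne
      rw [hne, h0]
    by_cases hl : Linked G Sᶜ
    · exact h1 S hS hl
    obtain ⟨A, hA, ⟨a, ha, haA⟩, ⟨b, hb, hbA⟩, hsum⟩ := exists_cosplit hne hl
    have hX := ih _ ?_ (S ∪ (A ∩ Sᶜ)) (hG.extend hS hA) rfl
    · have hY := ih _ ?_ (S ∪ (Aᶜ ∩ Sᶜ))
        (hG.extend hS fun x hx y hy hxy => not_congr (hA x hx y hy hxy)) rfl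
      · have := hsum p
        linarith
      · rw [← hn]
        refine Set.ncard_lt_ncard ⟨fun z hz hzS => hz (Or.inl hzS), fun h => ?_⟩
        exact h hb (Or.inr ⟨hbA, hb⟩)
    · rw [← hn]
      refine Set.ncard_lt_ncard ⟨fun z hz hzS => hz (Or.inl hzS), fun h => ?_⟩
      exact h ha (Or.inr ⟨haA, ha⟩)

/-- The rank inequalities for good flats imply those for all nonempty vertex sets, by splitting a
set that is not `2`-connected at a cutvertex or into components. -/
theorem fS_nonneg (hG : TL G Set.univ) {p : (Sym2 V → ℝ) × ℝ} (hp : 0 ≤ p.2)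
    (h0 : fS G Set.univ p = 0) (h1 : ∀ S, TL G S → Linked G Sᶜ → 0 ≤ fS G S p) (S : Set V)
    (hS : S.Nonempty) : 0 ≤ fS G S p := by
  induction hn : S.ncard using Nat.strong_induction_on generalizing S with
  | h n ih =>
    by_cases hT : TL G S
    · exact fS_nonneg_of_TL hG h0 h1 S hT
    by_cases hv : ∃ v, S = {v}
    · obtain ⟨v, rfl⟩ := hv
      rw [fS_singleton]
      exact le_rfl
    push Not at hv
    by_cases hl : Linked G S
    · obtain ⟨v, X, Y, -, -, hu, hi, hno, hX, hY, -⟩ := exists_split hl hT hv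
      have hvX : v ∈ X ∩ Y := by rw [hi]; rfl
      have h2 := ih _ (hn ▸ hX) X ⟨v, hvX.1⟩ rfl
      have h3 := ih _ (hn ▸ hY) Y ⟨v, hvX.2⟩ rfl
      have h4 := fS_modular G X Y hno p
      rw [hu, hi, fS_singleton, LinearMap.zero_apply] at h4
      linarith
    · obtain ⟨A, hA, ⟨a, ha, haA⟩, b, hb, hbA⟩ := exists_sep hS hl
      have h2 := ih _ (?_ : (S ∩ A).ncard < n) (S ∩ A) ⟨a, ha, haA⟩ rfl
      · have h3 := ih _ (?_ : (S \ A).ncard < n) (S \ A) ⟨b, hb, hbA⟩ rfl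
        · have h4 := fS_modular G (S ∩ A) (S \ A) (fun x hx y hy hxy =>
            (hy.2 ((hA x hx.1 y hy.1 hxy).1 hx.2)).elim) p
          have h5 : S ∩ A ∩ (S \ A) = ∅ := by
            ext z
            simp
            tauto
          obtain ⟨x, t⟩ := p
          rw [Set.inter_union_sdiff, h5, fS_empty] at h4
          have h6 : 0 ≤ t := hp
          linarith
        · rw [← hn]
          exact Set.ncard_lt_ncard ⟨Set.sdiff_subset, fun h => (h ha).2 haA⟩
      · rw [← hn]
        exact Set.ncard_lt_ncard ⟨Set.inter_subset_left, fun h => hbA (h hb).2⟩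

end

/-! ### Minimal spanning trees -/

section

variable {V : Type*} [Fintype V] [DecidableEq V] {G : SimpleGraph V}

set_option linter.unusedSectionVars false

theorem mem_of_reachable {J : SimpleGraph V} {A : Set V} (hA : ∀ x y, J.Adj x y → x ∈ A → y ∈ A)
    {a b : V} (h : J.Reachable a b) (ha : a ∈ A) : b ∈ A := by
  obtain ⟨p⟩ := h
  induction p with
  | nil => exact ha
  | cons hadj p ih => exact ih (hA _ _ hadj ha)

/-- The sublevel set at height `l` of an edge cost `c`, as a subgraph of `G`. -/
def sublevel (G : SimpleGraph V) (c : Sym2 V → ℝ) (l : ℝ) : SimpleGraph V :=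
  fromEdgeSet (G.edgeSet ∩ {e | c e ≤ l})

theorem sublevel_adj {c : Sym2 V → ℝ} {l : ℝ} {a b : V} :
    (sublevel G c l).Adj a b ↔ G.Adj a b ∧ c s(a, b) ≤ l := by
  rw [sublevel, fromEdgeSet_adj]
  exact ⟨fun h => h.1, fun h => ⟨h, h.1.ne⟩⟩

theorem mem_sublevel {c : Sym2 V → ℝ} {l : ℝ} {e : Sym2 V} :
    e ∈ (sublevel G c l).edgeSet ↔ e ∈ G.edgeSet ∧ c e ≤ l := by
  induction e with
  | h x y => exact sublevel_adj

theorem sum_ind_insert (c : Sym2 V → ℝ) {K : SimpleGraph V} {X : Set (Sym2 V)} {g : Sym2 V}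
    (hg : g ∉ X) (hK : insert g X = K.edgeSet) :
    ∑ e, c e * ind K e = c g + ∑ e, X.indicator c e := by
  classical
  have h1 : c g = ∑ f, if f = g then c f else 0 := by simp
  rw [h1, ← Finset.sum_add_distrib]
  refine Finset.sum_congr rfl fun e _ => ?_
  rw [ind, ← hK, Set.indicator_apply, Set.indicator_apply]
  by_cases he : e = g
  · subst he
    simp [hg]
  · simp [he]

/-- The exchange argument behind the greedy algorithm: a spanning tree of minimal cost joins the
ends of an edge of cost at most `l` by tree edges of cost at most `l`. -/
theorem reach_of_min {T : SimpleGraph V} (hTG : T ≤ G) (hT : T.IsTree) {c : Sym2 V → ℝ}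
    (hmin : ∀ T' ≤ G, T'.IsTree → ∑ e, c e * ind T e ≤ ∑ e, c e * ind T' e) {l : ℝ} {a b : V}
    (hab : (sublevel G c l).Adj a b) : (sublevel T c l).Reachable a b := by
  by_contra hn
  obtain ⟨hab, hc⟩ := sublevel_adj.1 hab
  have hJT : sublevel T c l ≤ T := fun x y h => (sublevel_adj.1 h).1
  have hJ : (sublevel T c l ⊔ edge a b).IsAcyclic :=
    (hT.isAcyclic.anti hJT).sup_edge_of_not_reachable hn
  have heT : s(a, b) ∉ T.edgeSet := fun h => hn (Adj.reachable (sublevel_adj.2 ⟨h, hc⟩))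
  have hHG : T ⊔ edge a b ≤ G := sup_le hTG (by
    rw [edge_le_iff]
    exact Or.inr hab)
  have hHe : (T ⊔ edge a b).edgeSet = insert s(a, b) T.edgeSet := by
    rw [edgeSet_sup, edgeSet_edge_of_ne hab.ne, Set.union_singleton]
  obtain ⟨T', h1, h2, h3⟩ := (hT.connected.mono (le_sup_left : T ≤ T ⊔ edge a b)
    ).exists_isTree_le_of_le_of_isAcyclic (sup_le_sup_right hJT _) hJ
  have he' : s(a, b) ∈ T'.edgeSet := h1 (Or.inr ((edge_adj _ _ _ _).2 ⟨Or.inl ⟨rfl, rfl⟩, hab.ne⟩))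
  have hsub : T'.edgeSet ⊆ insert s(a, b) T.edgeSet := hHe ▸ edgeSet_mono h2
  have hex : ∃ g ∉ T'.edgeSet \ {s(a, b)}, insert g (T'.edgeSet \ {s(a, b)}) = T.edgeSet := by
    refine (Set.exists_eq_insert_iff_ncard).2 ⟨?_, ?_⟩
    · rintro e ⟨he, hea⟩
      exact (hsub he).resolve_left hea
    · rw [Set.ncard_sdiff_singleton_add_one he']
      have := tree_ncard hT
      have := tree_ncard h3
      omega
  obtain ⟨g, hg, hgT⟩ := hex
  have hgT' : g ∈ T.edgeSet := hgT ▸ Set.mem_insert _ _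
  have hg' : g ∉ T'.edgeSet := fun h => hg ⟨h, fun h' => heT (h' ▸ hgT')⟩
  have hcg : l < c g := by
    by_contra! hcon
    exact hg' (edgeSet_mono (le_sup_left.trans h1) (mem_sublevel.2 ⟨hgT', hcon⟩))
  have := hmin T' (h2.trans hHG) h3
  rw [sum_ind_insert c hg hgT, sum_ind_insert c (X := T'.edgeSet \ {s(a, b)})
    (g := s(a, b)) (by simp) (by simp [he'])] at this
  linarith

/-- The components of a sublevel graph of the cost are connected by cheap edges of a spanning tree
of minimal cost. -/
theorem linked_of_min {T : SimpleGraph V} (hTG : T ≤ G) (hT : T.IsTree) {c : Sym2 V → ℝ}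
    (hmin : ∀ T' ≤ G, T'.IsTree → ∑ e, c e * ind T e ≤ ∑ e, c e * ind T' e) (l : ℝ) (v : V) :
    Linked (sublevel T c l) {x | (sublevel G c l).Reachable v x} := by
  refine ⟨⟨v, Reachable.refl v⟩, fun A hA a ha b hb haA => ?_⟩
  have hle : sublevel T c l ≤ sublevel G c l := fun x y h =>
    sublevel_adj.2 ⟨hTG (sublevel_adj.1 h).1, (sublevel_adj.1 h).2⟩
  have hcl : ∀ x y, (sublevel T c l).Adj x y →
      x ∈ {x | (sublevel G c l).Reachable v x → x ∈ A} →
      y ∈ {x | (sublevel G c l).Reachable v x → x ∈ A} := by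
    intro x y hxy hx hy
    have hvx : (sublevel G c l).Reachable v x := Reachable.trans hy (hle hxy).symm.reachable
    exact hA x hvx y hy hxy (hx hvx)
  have hcl' : ∀ x y, (sublevel G c l).Adj x y →
      x ∈ {x | (sublevel G c l).Reachable v x → x ∈ A} →
      y ∈ {x | (sublevel G c l).Reachable v x → x ∈ A} :=
    fun x y hxy => mem_of_reachable hcl (reach_of_min hTG hT hmin hxy)
  exact mem_of_reachable hcl' (Reachable.trans (Reachable.symm ha) hb) (fun _ => haA) hb

/-- Abel summation: if the partial sums of `u` over all sublevel sets of `c` are nonpositive, then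
`∑ c u` is bounded below by `M ∑ u` for every upper bound `M` of `c`. -/
theorem abel_sum {ι : Type*} [DecidableEq ι] (c u : ι → ℝ) (s : Finset ι)
    (h : ∀ l, ∑ i ∈ s with c i ≤ l, u i ≤ 0) (M : ℝ) (hM : ∀ i ∈ s, c i ≤ M) :
    M * ∑ i ∈ s, u i ≤ ∑ i ∈ s, c i * u i := by
  induction hn : s.card using Nat.strong_induction_on generalizing s M with
  | h n ih =>
    rcases s.eq_empty_or_nonempty with rfl | hs
    · simp
    obtain ⟨i₀, hi₀, hmax⟩ := s.exists_max_image c hs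
    have hs0 : ∑ i ∈ s, u i ≤ 0 := by
      have := h (c i₀)
      rwa [Finset.filter_true_of_mem hmax] at this
    have hlt : (s.filter fun i => c i < c i₀).card < n := by
      rw [← hn]
      exact Finset.card_lt_card (Finset.filter_ssubset.2 ⟨i₀, hi₀, lt_irrefl _⟩)
    have h' : ∀ l, ∑ i ∈ (s.filter fun i => c i < c i₀) with c i ≤ l, u i ≤ 0 := by
      intro l
      rw [Finset.filter_filter]
      by_cases hl : l < c i₀
      · have : (s.filter fun i => c i < c i₀ ∧ c i ≤ l) = s.filter fun i => c i ≤ l :=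
          Finset.filter_congr fun i _ => ⟨fun h => h.2, fun h => ⟨h.trans_lt hl, h⟩⟩
        rw [this]
        exact h l
      · have : (s.filter fun i => c i < c i₀ ∧ c i ≤ l) = s.filter fun i => c i < c i₀ :=
          Finset.filter_congr fun i _ => ⟨fun h => h.1, fun h => ⟨h, h.le.trans (not_lt.1 hl)⟩⟩
        rw [this]
        rcases (s.filter fun i => c i < c i₀).eq_empty_or_nonempty with he | he
        · simp [he]
        obtain ⟨j, hj, hjmax⟩ := Finset.exists_max_image _ c he
        have : (s.filter fun i => c i < c i₀) = s.filter fun i => c i ≤ c j :=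
          Finset.filter_congr fun i hi => ⟨fun h => hjmax i (Finset.mem_filter.2 ⟨hi, h⟩),
            fun h => h.trans_lt (Finset.mem_filter.1 hj).2⟩
        rw [this]
        exact h (c j)
    have key := ih _ hlt (s.filter fun i => c i < c i₀) h' (c i₀)
      (fun i hi => (Finset.mem_filter.1 hi).2.le) rfl
    have e1 := Finset.sum_filter_add_sum_filter_not s (fun i => c i < c i₀) u
    have e2 := Finset.sum_filter_add_sum_filter_not s (fun i => c i < c i₀) fun i => c i * u i
    have e3 : ∑ i ∈ s with ¬ c i < c i₀, c i * u i = c i₀ * ∑ i ∈ s with ¬ c i < c i₀, u i := by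
      rw [Finset.mul_sum]
      refine Finset.sum_congr rfl fun i hi => ?_
      obtain ⟨hi, hi'⟩ := Finset.mem_filter.1 hi
      rw [le_antisymm (hmax i hi) (not_lt.1 hi')]
    have e4 := mul_le_mul_of_nonpos_right (hM i₀ hi₀) hs0
    have e5 : c i₀ * ∑ i ∈ s, u i =
        c i₀ * ∑ i ∈ s with c i < c i₀, u i + c i₀ * ∑ i ∈ s with ¬ c i < c i₀, u i := by
      rw [← e1, mul_add]
    linarith

end

/-! ### Membership in the dilated polytope and in the lattice -/

section

variable {V : Type*} [Fintype V] [DecidableEq V] {G : SimpleGraph V}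

set_option linter.unusedSectionVars false

/-- The sublevel sums of `v` are bounded by those of `δ` times a minimal spanning tree: on each
component of the sublevel graph, the inequality of `fS` is tight for the tree. -/
theorem level_bound {T : SimpleGraph V} (hTG : T ≤ G) (hT : T.IsTree) {c : Sym2 V → ℝ}
    (hmin : ∀ T' ≤ G, T'.IsTree → ∑ e, c e * ind T e ≤ ∑ e, c e * ind T' e) (l : ℝ)
    {v : Sym2 V → ℝ} {δ : ℝ} (hδ : 0 ≤ δ) (hv : ∀ e, 0 ≤ v e)
    (hS : ∀ S : Set V, S.Nonempty → 0 ≤ fS G S (v, δ)) :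
    ∑ e, (sublevel G c l).edgeSet.indicator v e ≤ δ * (sublevel T c l).edgeSet.ncard := by
  classical
  set K := sublevel G c l with hK
  set J := sublevel T c l with hJ
  have hJK : J ≤ K := fun x y h => sublevel_adj.2 ⟨hTG (sublevel_adj.1 h).1, (sublevel_adj.1 h).2⟩
  let κ : Sym2 V → K.ConnectedComponent := fun e => K.connectedComponentMk e.out.1
  rw [← sum_indicator_one, ← Finset.sum_fiberwise Finset.univ κ (K.edgeSet.indicator v),
    ← Finset.sum_fiberwise Finset.univ κ (J.edgeSet.indicator _), Finset.mul_sum]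
  refine Finset.sum_le_sum fun C _ => ?_
  induction C using ConnectedComponent.ind with
  | h v₀ =>
    have hlink : Linked J {x | K.Reachable v₀ x} := linked_of_min hTG hT hmin l v₀
    set S := {x | K.Reachable v₀ x} with hSdef
    have hκ : ∀ e, κ e = K.connectedComponentMk v₀ ↔ e.out.1 ∈ S := fun e =>
      ConnectedComponent.eq.trans ⟨fun h => h.symm, fun h => Reachable.symm h⟩
    have h1 : ∑ e with κ e = K.connectedComponentMk v₀, K.edgeSet.indicator v e ≤
        ∑ e, (edgesIn G S).indicator v e := by
      rw [Finset.sum_filter]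
      refine Finset.sum_le_sum fun e _ => ?_
      split_ifs with he
      · rw [hκ] at he
        have hz := e.out_fst_mem
        generalize e.out.1 = z at he hz
        by_cases heK : e ∈ K.edgeSet
        · rw [Set.indicator_of_mem heK, Set.indicator_of_mem]
          refine ⟨(mem_sublevel.1 heK).1, fun y hy => ?_⟩
          by_cases hzy : z = y
          · exact hzy ▸ he
          · rw [(Sym2.mem_and_mem_iff hzy).1 ⟨hz, hy⟩] at heK
            exact Reachable.trans he (Adj.reachable heK)
        · rw [Set.indicator_of_notMem heK]
          exact Set.indicator_nonneg (fun e _ => hv e) e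
      · exact Set.indicator_nonneg (fun e _ => hv e) e
    have h2 : ∑ e, (edgesIn J S).indicator (fun _ => (1 : ℝ)) e ≤
        ∑ e with κ e = K.connectedComponentMk v₀, J.edgeSet.indicator (fun _ => (1 : ℝ)) e := by
      rw [Finset.sum_filter]
      refine Finset.sum_le_sum fun e _ => ?_
      by_cases he : e ∈ edgesIn J S
      · rw [if_pos ((hκ e).2 (he.2 _ e.out_fst_mem)), Set.indicator_of_mem he,
          Set.indicator_of_mem he.1]
      · rw [Set.indicator_of_notMem he]
        split_ifs
        · exact Set.indicator_nonneg (fun _ _ => zero_le_one) e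
        · exact le_rfl
    rw [sum_indicator_one] at h2
    have h3 := hS S hlink.1
    rw [fS, gD_apply] at h3
    have h4 : (S.ncard : ℝ) ≤ (edgesIn J S).ncard + 1 := by exact_mod_cast hlink.le_ncard
    calc _ ≤ _ := h1
      _ ≤ δ * (S.ncard - 1) := by linarith
      _ ≤ δ * (edgesIn J S).ncard := by gcongr; linarith
      _ ≤ _ := by gcongr

theorem treeSet_finite (G : SimpleGraph V) : (treeSet G).Finite := by
  have : treeSet G ⊆ Set.range (ind (V := V)) := by
    rintro x ⟨T, -, -, rfl⟩
    exact ⟨T, rfl⟩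
  exact (Set.finite_range _).subset this

/-- If the rank form of all vertices vanishes at `(v, δ)`, then `v` has the coordinate sum of `δ` times
a spanning tree. -/
theorem sum_excess {v : Sym2 V → ℝ} {δ : ℝ} (hv0 : ∀ e ∉ G.edgeSet, v e = 0)
    (h0 : fS G Set.univ (v, δ) = 0) {T : SimpleGraph V} (hT : T ≤ G) (hT' : T.IsTree) :
    ∑ e, (v e - δ * ind T e) = 0 := by
  have h1 := fS_tree_eq_zero hT hT'.isAcyclic ((linked_univ_iff T).1 hT'.connected)
  rw [fS, gD_apply, edgesIn_univ] at h0 h1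
  have e1 : ∑ e, v e = ∑ e, G.edgeSet.indicator v e :=
    Finset.sum_congr rfl fun e _ => by
      by_cases he : e ∈ G.edgeSet <;> simp [he, hv0]
  have e2 : ∑ e, ind T e = ∑ e, G.edgeSet.indicator (ind T) e :=
    Finset.sum_congr rfl fun e _ => by
      by_cases he : e ∈ G.edgeSet
      · simp [he]
      · rw [Set.indicator_of_notMem he, ind,
          Set.indicator_of_notMem fun h => he (edgeSet_mono hT h)]
  rw [Finset.sum_sub_distrib, ← Finset.mul_sum, e1, e2]
  have h1' : ∑ e, G.edgeSet.indicator (ind T) e = ((Set.univ : Set V).ncard : ℝ) - 1 := by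
    linarith
  rw [h1']
  linarith

/-- The inequalities of `fS` for all nonempty vertex sets, together with nonnegativity, cut out the
dilated base polytope. A linear functional separating `v` from it would be minimized over the
polytope at a spanning tree, contradicting the greedy algorithm. -/
theorem mem_polytope (hG : G.Connected) {v : Sym2 V → ℝ} {δ : ℝ} (hδ : 0 < δ)
    (hv : ∀ e, 0 ≤ v e) (hv0 : ∀ e ∉ G.edgeSet, v e = 0) (h0 : fS G Set.univ (v, δ) = 0)
    (hS : ∀ S : Set V, S.Nonempty → 0 ≤ fS G S (v, δ)) : v ∈ δ • basePolytope G := by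
  classical
  rw [Set.mem_smul_set_iff_inv_smul_mem₀ hδ.ne' (basePolytope G) v]
  by_contra hn
  rw [basePolytope_eq hG] at hn
  obtain ⟨f, u, hfu, huf⟩ := geometric_hahn_banach_point_closed (convex_convexHull ℝ (treeSet G))
    ((treeSet_finite G).isClosed_convexHull ℝ) hn
  set c : Sym2 V → ℝ := fun e => f (Pi.single e 1) with hc
  have hf : ∀ x, f x = ∑ e, c e * x e := by
    intro x
    conv_lhs => rw [← Finset.univ_sum_single x]
    rw [map_sum]
    refine Finset.sum_congr rfl fun e _ => ?_
    rw [hc, mul_comm, ← smul_eq_mul, ← map_smul, ← Pi.single_smul, smul_eq_mul, mul_one]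
  obtain ⟨T₀, -, hT₀, hT₀'⟩ := hG.exists_isTree_le_of_le_of_isAcyclic bot_le isAcyclic_bot
  obtain ⟨x, ⟨T, hTG, hT, rfl⟩, hmin⟩ :=
    Set.exists_min_image (treeSet G) f (treeSet_finite G) ⟨_, T₀, hT₀, hT₀', rfl⟩
  have hmin' : ∀ T' ≤ G, T'.IsTree → ∑ e, c e * ind T e ≤ ∑ e, c e * ind T' e := by
    intro T' h1 h2
    rw [← hf, ← hf]
    exact hmin _ ⟨T', h1, h2, rfl⟩
  have hlt : ∑ e, c e * v e < δ * ∑ e, c e * ind T e := by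
    rw [← hf, ← hf]
    have h1 := huf _ (subset_convexHull ℝ _ ⟨T, hTG, hT, rfl⟩)
    have h2 := hfu.trans h1
    rw [map_smul, smul_eq_mul] at h2
    exact (inv_mul_lt_iff₀ hδ).1 h2
  have hfilt : ∀ (T' : SimpleGraph V) (x : Sym2 V → ℝ) (l : ℝ), (∀ e ∉ T'.edgeSet, x e = 0) →
      ∑ e with c e ≤ l, x e = ∑ e, (sublevel T' c l).edgeSet.indicator x e := by
    intro T' x l hx
    rw [Finset.sum_filter]
    refine Finset.sum_congr rfl fun e _ => ?_
    rw [Set.indicator_apply]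
    by_cases h1 : e ∈ T'.edgeSet
    · simp [mem_sublevel, h1]
    · rw [hx e h1]
      simp
  have hindT : ∀ e ∉ T.edgeSet, ind T e = 0 := fun e he => Set.indicator_of_notMem he _
  have key := abel_sum c (fun e => v e - δ * ind T e) Finset.univ ?_
    (∑ e, |c e|) (fun e _ => (le_abs_self _).trans
      (Finset.single_le_sum (f := fun e => |c e|) (fun e _ => abs_nonneg _) (Finset.mem_univ e)))
  · have hs := sum_excess hv0 h0 hTG hT
    rw [hs, mul_zero] at key
    have : ∑ e, c e * (v e - δ * ind T e) = ∑ e, c e * v e - δ * ∑ e, c e * ind T e := by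
      rw [Finset.mul_sum, ← Finset.sum_sub_distrib]
      exact Finset.sum_congr rfl fun e _ => by ring
    linarith
  · intro l
    rw [Finset.sum_sub_distrib, ← Finset.mul_sum, hfilt G v l hv0, hfilt T (ind T) l hindT]
    have h1 := level_bound hTG hT hmin' l hδ.le hv hS
    have h2 : ∑ e, (sublevel T c l).edgeSet.indicator (ind T) e = (sublevel T c l).edgeSet.ncard := by
      rw [← sum_indicator_one]
      refine Finset.sum_congr rfl fun e _ => ?_
      by_cases he : e ∈ (sublevel T c l).edgeSet
      · rw [Set.indicator_of_mem he, Set.indicator_of_mem he, ind,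
          Set.indicator_of_mem (mem_sublevel.1 he).1]
      · rw [Set.indicator_of_notMem he, Set.indicator_of_notMem he]
    rw [h2]
    linarith

/-- Integral vectors supported on the edges, of the right coordinate sum, belong to the lattice. -/
theorem mem_lattice (hG : TL G Set.univ) {v : Sym2 V → ℝ} {δ : ℤ} (hv : IsLatticePoint v)
    (hv0 : ∀ e ∉ G.edgeSet, v e = 0) (h0 : fS G Set.univ (v, (δ : ℝ)) = 0) :
    (v, (δ : ℝ)) ∈ coneLattice (basePolytope G) := by
  classical
  have hGc := hG.connected
  obtain ⟨T, -, hT, hT'⟩ := hGc.exists_isTree_le_of_le_of_isAcyclic bot_le isAcyclic_bot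
  obtain ⟨e₀, he₀⟩ := hG.exists_edge
  rw [edgesIn_univ] at he₀
  choose x hx using hv
  choose y hy using isLatticePoint_ind T
  have hsum := sum_excess hv0 h0 hT hT'
  have hdec : (v, (δ : ℝ)) = δ • (ind T, (1 : ℝ)) + ∑ e, (x e - δ * y e) • dv e e₀ := by
    have hfst : (∑ e, (x e - δ * y e) • dv e e₀).1 = v - (δ : ℝ) • ind T := by
      rw [Prod.fst_sum]
      ext f
      have h1 : ∀ e, ((x e - δ * y e) • dv e e₀).1 f =
          (if e = f then v f - δ * ind T f else 0) -
            (if f = e₀ then v e - δ * ind T e else 0) := by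
        intro e
        have : (x e - δ * y e) • dv e e₀ = (v e - δ * ind T e) • dv e e₀ := by
          rw [hx, hy, ← Int.cast_smul_eq_zsmul ℝ]
          push_cast
          rfl
        rw [this]
        have h2 : (dv e e₀).1 f = (if e = f then 1 else 0) - (if f = e₀ then 1 else 0) := by
          simp [dv, Pi.single_apply, eq_comm]
        rw [Prod.smul_fst, Pi.smul_apply, h2, smul_eq_mul, mul_sub, mul_ite, mul_ite]
        simp only [mul_one, mul_zero]
        congr 1
        split_ifs with h3
        · rw [h3]
        · rfl
      rw [Finset.sum_apply, Finset.sum_congr rfl fun e _ => h1 e, Finset.sum_sub_distrib]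
      by_cases h2 : f = e₀ <;> simp [h2, hsum]
    have hsnd : (∑ e, (x e - δ * y e) • dv e e₀).2 = 0 := by
      rw [Prod.snd_sum]
      exact Finset.sum_eq_zero fun e _ => by simp [dv]
    ext1
    · rw [Prod.fst_add, hfst, ← Int.cast_smul_eq_zsmul ℝ]
      simp
    · rw [Prod.snd_add, hsnd]
      simp
  rw [hdec]
  refine Submodule.add_mem _ (Submodule.smul_mem _ _ (ind_mem_lattice hGc hT hT'))
    (Submodule.sum_mem _ fun e _ => ?_)
  by_cases he : e ∈ G.edgeSet
  · exact Submodule.smul_mem _ _ (dv_mem_lattice hG he he₀)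
  · have h1 : x e = 0 := by
      have := hx e
      rw [hv0 e he] at this
      exact_mod_cast this.symm
    have h2 : y e = 0 := by
      have := hy e
      rw [ind, Set.indicator_of_notMem fun h => he (edgeSet_mono hT h)] at this
      exact_mod_cast this.symm
    rw [h1, h2, mul_zero, sub_zero, zero_smul]
    exact Submodule.zero_mem _

end

/-! ### Classification of the facets; sufficiency -/

section

variable {V : Type*} [Fintype V] [DecidableEq V] {G : SimpleGraph V}

set_option linter.unusedSectionVars false

theorem fS_tree_eq_zero' {G' T : SimpleGraph V} (hT : T.IsAcyclic) {S : Set V}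
    (hS : Linked (T ⊓ G') S) : fS G' S (ind T, 1) = 0 := by
  apply le_antisymm _ (fS_tree_nonneg G' hT hS.1)
  rw [fS_tree]
  have : (S.ncard : ℝ) ≤ (edgesIn (T ⊓ G') S).ncard + 1 := by exact_mod_cast hS.le_ncard
  linarith

theorem fS_dv_eq_zero {G' : SimpleGraph V} {S : Set V} {a b : Sym2 V}
    (h : a ∈ edgesIn G' S ↔ b ∈ edgesIn G' S) : fS G' S (dv a b) = 0 := by
  rw [fS, gD_dv]
  by_cases ha : a ∈ edgesIn G' S
  · rw [if_pos ha, if_pos (h.1 ha), sub_self]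
  · rw [if_neg ha, if_neg fun hb => ha (h.2 hb), sub_self]

theorem tree_nonneg (hG : G.Connected) {h : ((Sym2 V → ℝ) × ℝ) →ₗ[ℝ] ℝ}
    (hh : IsFacetForm (basePolytope G) h) {T : SimpleGraph V} (hT : T ≤ G) (hT' : T.IsTree) :
    0 ≤ h (ind T, 1) := hh.1 _ (ind_mem_cone hG hT hT')

/-- A form that vanishes on a facet, but not identically, is not the sum of two forms that are
nonnegative on the polytope and not proportional to it. -/
theorem no_split (hG : G.Connected) {h f f₁ f₂ : ((Sym2 V → ℝ) × ℝ) →ₗ[ℝ] ℝ}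
    (hh : IsFacetForm (basePolytope G) h)
    (hz : ∀ T ≤ G, T.IsTree → h (ind T, 1) = 0 → f (ind T, 1) = 0)
    (hf : ∀ y ∈ Wsp G, f₁ y + f₂ y = f y)
    (h₁ : ∀ T ≤ G, T.IsTree → 0 ≤ f₁ (ind T, 1)) (h₂ : ∀ T ≤ G, T.IsTree → 0 ≤ f₂ (ind T, 1))
    {y d : (Sym2 V → ℝ) × ℝ} (hy : y ∈ Wsp G) (hfy : f y ≠ 0) (hd : d ∈ Wsp G) (hfd : f d = 0)
    (hd₁ : f₁ d ≠ 0) : False := by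
  obtain ⟨α, hα⟩ := proportional hG hh hz
  obtain ⟨β, hβ⟩ := proportional hG hh (g := f₁) fun T hT hT' h0 => by
    have e1 := hf _ (ind_mem_Wsp hG hT hT')
    rw [hz T hT hT' h0] at e1
    have := h₁ T hT hT'
    have := h₂ T hT hT'
    linarith
  have hα0 : α ≠ 0 := fun h0 => hfy (by rw [hα y hy, h0, zero_mul])
  rw [hα d hd] at hfd
  rw [hβ d hd, (mul_eq_zero.1 hfd).resolve_left hα0, mul_zero] at hd₁
  exact hd₁ rfl

/-- If the rank form of a connected set `S` of a subgraph `G'` vanishes on a facet, then `S` is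
`2`-connected in `G'`: a cutvertex would split the form into two. -/
theorem TL_of_facet (hG : TL G Set.univ) {h : ((Sym2 V → ℝ) × ℝ) →ₗ[ℝ] ℝ}
    (hh : IsFacetForm (basePolytope G) h) {G' : SimpleGraph V} (hG' : G' ≤ G) {S : Set V}
    (hS : Linked G' S) {a b : Sym2 V} (ha : a ∈ G.edgeSet) (haS : a ∉ edgesIn G' S)
    (hb : b ∈ edgesIn G' S)
    (hz : ∀ T ≤ G, T.IsTree → h (ind T, 1) = 0 → fS G' S (ind T, 1) = 0) : TL G' S := by
  by_contra hn
  have hE : ∀ {X e}, e ∈ edgesIn G' X → e ∈ G.edgeSet := fun he => edgeSet_mono hG' he.1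
  obtain ⟨v, X, Y, a', b', hXY, hXYv, hadj, -, -, ha'X, ha'Y, hb'Y, hb'X⟩ :=
    exists_split hS hn fun v hv => by
      rw [hv, edgesIn_singleton] at hb
      exact hb
  have hvXY : v ∈ X ∩ Y := hXYv ▸ Set.mem_singleton v
  have hmono : ∀ {X' e}, X' ⊆ S → e ∈ edgesIn G' X' → e ∈ edgesIn G' S :=
    fun hX' he => ⟨he.1, fun u hu => hX' (he.2 u hu)⟩
  have ha'S := hmono (hXY ▸ Set.subset_union_left : X ⊆ S) ha'X
  have hb'S := hmono (hXY ▸ Set.subset_union_right : Y ⊆ S) hb'Y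
  refine no_split hG.connected hh hz (f₁ := fS G' Y) (f₂ := fS G' X) ?_
    (fun T _ hT => fS_tree_nonneg G' hT.isAcyclic ⟨v, hvXY.2⟩)
    (fun T _ hT => fS_tree_nonneg G' hT.isAcyclic ⟨v, hvXY.1⟩)
    (y := dv a b) (d := dv a' b')
    (lattice_mem_Wsp (dv_mem_lattice hG ha (hE hb))) ?_
    (lattice_mem_Wsp (dv_mem_lattice hG (hE ha'X) (hE hb'Y))) ?_ ?_
  · intro y _
    rw [add_comm, fS_modular G' X Y hadj, hXY, hXYv, fS_singleton, LinearMap.zero_apply, add_zero]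
  · rw [fS_dv_eq_one haS hb]
    exact one_ne_zero
  · exact fS_dv_eq_zero ⟨fun _ => hb'S, fun _ => ha'S⟩
  · rw [fS_dv_eq_one ha'Y hb'Y]
    exact one_ne_zero

/-- If the rank form of `S` vanishes on a facet, then the complement of `S` is connected: otherwise
the form would split into those of two larger sets. -/
theorem linked_compl_of_facet (hG : TL G Set.univ) {h : ((Sym2 V → ℝ) × ℝ) →ₗ[ℝ] ℝ}
    (hh : IsFacetForm (basePolytope G) h) {S : Set V} (hSne : S.Nonempty) (hSc : Sᶜ.Nonempty)
    {a b : Sym2 V} (ha : a ∈ G.edgeSet) (haS : a ∉ edgesIn G S) (hb : b ∈ edgesIn G S)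
    (hz : ∀ T ≤ G, T.IsTree → h (ind T, 1) = 0 → fS G S (ind T, 1) = 0) : Linked G Sᶜ := by
  by_contra hn
  obtain ⟨A, hA, ⟨p, hp, hpA⟩, ⟨q, hq, hqA⟩, hmod⟩ := exists_cosplit hSc hn
  obtain ⟨p', -, hpp'⟩ := hG.exists_adj (v := p) trivial
  obtain ⟨q', -, hqq'⟩ := hG.exists_adj (v := q) trivial
  obtain ⟨s, hs⟩ := hSne
  refine no_split hG.connected hh hz (f₁ := fS G (S ∪ (Aᶜ ∩ Sᶜ))) (f₂ := fS G (S ∪ (A ∩ Sᶜ))) ?_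
    (fun T _ hT => fS_tree_nonneg G hT.isAcyclic ⟨s, Or.inl hs⟩)
    (fun T _ hT => fS_tree_nonneg G hT.isAcyclic ⟨s, Or.inl hs⟩)
    (y := dv a b) (d := dv s(p, p') s(q, q'))
    (lattice_mem_Wsp (dv_mem_lattice hG ha hb.1)) ?_
    (lattice_mem_Wsp (dv_mem_lattice hG hpp' hqq')) ?_ ?_
  · intro y hy
    rw [add_comm, hmod, fS_univ_Wsp hG.connected hy, zero_add]
  · rw [fS_dv_eq_one haS hb]
    exact one_ne_zero
  · exact fS_dv_eq_zero ⟨fun h => absurd (mem_edgesIn.1 h).2.1 hp,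
      fun h => absurd (mem_edgesIn.1 h).2.1 hq⟩
  · rw [fS_dv_eq_one]
    · exact one_ne_zero
    · rintro h
      rcases (mem_edgesIn.1 h).2.1 with h | h
      · exact hp h
      · exact h.1 hpA
    · refine mem_edgesIn.2 ⟨hqq', Or.inr ⟨hqA, hq⟩, ?_⟩
      by_cases hq' : q' ∈ S
      · exact Or.inl hq'
      · exact Or.inr ⟨fun h => hqA ((hA q hq q' hq' hqq').2 h), hq'⟩

/-- A reduced facet equation agrees with a rank form that vanishes on the facet: both are primitive
on the lattice, the rank form because of the edges `a` and `b` on either side of it. -/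
theorem reduced_unique (hG : TL G Set.univ) {h : ((Sym2 V → ℝ) × ℝ) →ₗ[ℝ] ℝ}
    (hh : IsFacetForm (basePolytope G) h) (hr : IsReducedForm (basePolytope G) h)
    {G' : SimpleGraph V} (hG' : G' ≤ G) {S : Set V} (hS : S.Nonempty) {a b : Sym2 V}
    (ha : a ∈ G.edgeSet) (haS : a ∉ edgesIn G' S) (hb : b ∈ edgesIn G' S)
    (hz : ∀ T ≤ G, T.IsTree → h (ind T, 1) = 0 → fS G' S (ind T, 1) = 0)
    {y : (Sym2 V → ℝ) × ℝ} (hy : y ∈ Wsp G) : h y = fS G' S y := by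
  have hGc := hG.connected
  obtain ⟨α, hα⟩ := proportional hGc hh hz
  have hd := dv_mem_lattice hG ha (edgeSet_mono hG' hb.1)
  have h1 := hα _ (lattice_mem_Wsp hd)
  rw [fS_dv_eq_one haS hb] at h1
  obtain ⟨z, hz'⟩ := hr.1 _ hd
  obtain ⟨y₁, hy₁, hy₁'⟩ := hr.2
  have h2 := hα _ (lattice_mem_Wsp hy₁)
  obtain ⟨m, hm⟩ := fS_int (G := G) G' S hy₁
  rw [hm, hy₁', mul_one] at h2
  rw [hz', ← h2] at h1
  have h3 : m * z = 1 := by exact_mod_cast h1.symm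
  obtain ⟨T, hT, hT', hne⟩ := facet_ne hGc hh
  have h4 := hα _ (ind_mem_Wsp hGc hT hT')
  have h5 := lt_of_le_of_ne (tree_nonneg hGc hh hT hT') hne.symm
  have h6 := fS_tree_nonneg G' hT'.isAcyclic hS
  have h7 : 0 ≤ α := by
    by_contra! hcon
    have := mul_neg_of_neg_of_pos hcon h5
    linarith
  have h8 : m = 1 := by
    have : 0 ≤ m := by
      rw [← h2] at h7
      exact_mod_cast h7
    exact Int.eq_one_of_mul_eq_one_right this h3
  have h9 : α = 1 := by rw [← h2, h8, Int.cast_one]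
  rw [hα y hy, h9, one_mul]

theorem form_apply (h : ((Sym2 V → ℝ) × ℝ) →ₗ[ℝ] ℝ) (x : Sym2 V → ℝ) (t : ℝ) :
    h (x, t) = ∑ e, h (Pi.single e 1, 0) * x e + t * h (0, 1) := by
  have h1 : (x, t) = ∑ e, x e • ((Pi.single e 1 : Sym2 V → ℝ), (0 : ℝ)) + t • (0, 1) := by
    ext1
    · rw [Prod.fst_add, Prod.fst_sum]
      ext f
      simp [Finset.sum_apply, Pi.single_apply]
    · rw [Prod.snd_add, Prod.snd_sum]
      simp
  conv_lhs => rw [h1]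
  rw [map_add, map_sum, map_smul, smul_eq_mul]
  congr 1
  refine Finset.sum_congr rfl fun e _ => ?_
  rw [map_smul, smul_eq_mul, mul_comm]

/-- If all edges have the same coefficient in a facet form, there is only one edge. -/
theorem subsingleton_of_const (hG : TL G Set.univ) {h : ((Sym2 V → ℝ) × ℝ) →ₗ[ℝ] ℝ}
    (hh : IsFacetForm (basePolytope G) h)
    (hc : ∀ a ∈ G.edgeSet, ∀ b ∈ G.edgeSet, h (Pi.single a 1, 0) = h (Pi.single b 1, 0))
    {a b : Sym2 V} (ha : a ∈ G.edgeSet) (hb : b ∈ G.edgeSet) : a = b := by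
  by_contra hab
  have hGc := hG.connected
  have hconst : ∀ T ≤ G, T.IsTree → h (ind T, 1) =
      h (Pi.single a 1, 0) * ((Nat.card V : ℝ) - 1) + h (0, 1) := by
    intro T hT hT'
    rw [form_apply, one_mul]
    have h1 : (T.edgeSet.ncard : ℝ) = Nat.card V - 1 := by
      rw [← tree_ncard hT']
      push_cast
      ring
    rw [← h1, ← sum_indicator_one, Finset.mul_sum]
    congr 1
    refine Finset.sum_congr rfl fun e _ => ?_
    rw [ind]
    by_cases he : e ∈ T.edgeSet
    · rw [hc e (edgeSet_mono hT he) a ha]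
    · rw [Set.indicator_of_notMem he, mul_zero, mul_zero]
  obtain ⟨T₀, hT₀, hT₀', hne⟩ := facet_ne hGc hh
  obtain ⟨α, hα⟩ := proportional hGc hh
    (g := (LinearMap.proj a).comp (LinearMap.fst ℝ (Sym2 V → ℝ) ℝ)) fun T hT hT' h0 => by
      rw [hconst T hT hT', ← hconst T₀ hT₀ hT₀'] at h0
      exact absurd h0 hne
  have h1 := hα _ (lattice_mem_Wsp (dv_mem_lattice hG ha hb))
  have h2 : h (dv a b) = 0 := by
    have : dv a b = ((Pi.single a 1 : Sym2 V → ℝ), (0 : ℝ)) - (Pi.single b 1, 0) := by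
      ext1 <;> simp [dv]
    rw [this, map_sub, hc a ha b hb, sub_self]
  rw [h2, mul_zero] at h1
  simp [dv, hab] at h1

/-- If there is only one spanning tree, a reduced facet equation takes the value `1` on it. -/
theorem form_eq_one_of_single (hG : TL G Set.univ) {h : ((Sym2 V → ℝ) × ℝ) →ₗ[ℝ] ℝ}
    (hh : IsFacetForm (basePolytope G) h) (hr : IsReducedForm (basePolytope G) h)
    {T : SimpleGraph V} (hT : T ≤ G) (hT' : T.IsTree) (hu : ∀ T' ≤ G, T'.IsTree → T' = T) :
    h (ind T, 1) = 1 := by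
  have hGc := hG.connected
  obtain ⟨y, hy, hy1⟩ := hr.2
  have hW : Wsp G ≤ Submodule.span ℝ {(ind T, (1 : ℝ))} := Wsp_le hGc fun T' h1 h2 => by
    rw [hu T' h1 h2]
    exact Submodule.mem_span_singleton_self _
  obtain ⟨t, rfl⟩ := Submodule.mem_span_singleton.1 (hW (lattice_mem_Wsp hy))
  obtain ⟨m, hm⟩ := (lattice_int hy).2
  obtain ⟨z, hz⟩ := hr.1 _ (ind_mem_lattice hGc hT hT')
  have hpos := tree_nonneg hGc hh hT hT'
  rw [Prod.smul_snd, smul_eq_mul, mul_one] at hm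
  rw [map_smul, smul_eq_mul, hm, hz] at hy1
  rw [hz] at hpos ⊢
  have h1 : z * m = 1 := by
    rw [mul_comm]
    exact_mod_cast hy1
  have h2 : 0 ≤ z := by exact_mod_cast hpos
  rw [Int.eq_one_of_mul_eq_one_right h2 h1, Int.cast_one]

/-- The facets of the base polytope: unless there is only one edge, the reduced equation of a facet
is that of a good flat or that of the deletion of an edge. The spanning trees on the facet are
those minimizing the coefficients `c` of `h`. They are connected on each component `S` of a
sublevel graph of `c`, so the rank form of `S`, or of `G∖b` if `S` is everything, vanishes on the
facet. -/
theorem facet_cases (hG : TL G Set.univ) {h : ((Sym2 V → ℝ) × ℝ) →ₗ[ℝ] ℝ}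
    (hh : IsFacetForm (basePolytope G) h) (hr : IsReducedForm (basePolytope G) h) :
    (∀ a ∈ G.edgeSet, ∀ b ∈ G.edgeSet, a = b) ∨
      (∃ S, TL G S ∧ Linked G Sᶜ ∧ ∀ y ∈ Wsp G, h y = fS G S y) ∨
      ∃ e ∈ G.edgeSet, TL (G.deleteEdges {e}) Set.univ ∧
        ∀ y ∈ Wsp G, h y = fS (G.deleteEdges {e}) Set.univ y := by
  have hGc := hG.connected
  by_cases hc : ∀ a ∈ G.edgeSet, ∀ b ∈ G.edgeSet, h (Pi.single a 1, 0) = h (Pi.single b 1, 0)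
  · exact Or.inl fun a ha b hb => subsingleton_of_const hG hh hc ha hb
  right
  set c : Sym2 V → ℝ := fun e => h (Pi.single e 1, 0) with hcdef
  obtain ⟨a, ha, b, hb, hab⟩ : ∃ a ∈ G.edgeSet, ∃ b ∈ G.edgeSet, c a < c b := by
    push Not at hc
    obtain ⟨a, ha, b, hb, hab⟩ := hc
    rcases lt_or_gt_of_ne hab with hab | hab
    · exact ⟨a, ha, b, hb, hab⟩
    · exact ⟨b, hb, a, ha, hab⟩
  -- a spanning tree on the facet has minimal cost with respect to the coefficients of `h`
  have hmin : ∀ T ≤ G, T.IsTree → h (ind T, 1) = 0 →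
      ∀ T' ≤ G, T'.IsTree → ∑ e, c e * ind T e ≤ ∑ e, c e * ind T' e := by
    intro T hT hT' h0 T' h1 h2
    have h3 := tree_nonneg hGc hh h1 h2
    rw [form_apply] at h0 h3
    linarith
  induction a with
  | h p q =>
    have hlink : ∀ T ≤ G, T.IsTree → h (ind T, 1) = 0 →
        Linked (sublevel T c (c s(p, q))) {x | (sublevel G c (c s(p, q))).Reachable p x} :=
      fun T hT hT' h0 => linked_of_min hT hT' (hmin T hT hT' h0) _ p
    have hpq : (sublevel G c (c s(p, q))).Adj p q := sublevel_adj.2 ⟨ha, le_rfl⟩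
    set S := {x | (sublevel G c (c s(p, q))).Reachable p x} with hS
    have hSlink : Linked (sublevel G c (c s(p, q))) S := by
      refine ⟨⟨p, Reachable.refl p⟩, fun A hA x hx y hy hxA => ?_⟩
      refine mem_of_reachable (J := sublevel G c (c s(p, q))) (A := {z | z ∈ S → z ∈ A}) ?_
        (Reachable.trans (Reachable.symm hx) hy) (fun _ => hxA) hy
      intro u u' huu hu hu'
      have : u ∈ S := Reachable.trans hu' (Reachable.symm (Adj.reachable huu))
      exact hA u this u' hu' huu (hu this)
    have haS : s(p, q) ∈ edgesIn G S := mem_edgesIn.2 ⟨ha, Reachable.refl p, hpq.reachable⟩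
    by_cases hu : S = Set.univ
    · right
      rw [hu] at hlink hSlink
      have hle : G.deleteEdges {b} ≤ G := deleteEdges_le _
      have hsub : sublevel G c (c s(p, q)) ≤ G.deleteEdges {b} := fun x y hxy => by
        rw [deleteEdges_adj]
        refine ⟨(sublevel_adj.1 hxy).1, fun hxb => ?_⟩
        rw [Set.mem_singleton_iff] at hxb
        have := (sublevel_adj.1 hxy).2
        rw [hxb] at this
        exact hab.not_ge this
      have hbS : b ∉ edgesIn (G.deleteEdges {b}) Set.univ := by
        rw [edgesIn_univ, edgeSet_deleteEdges]
        exact fun h => h.2 rfl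
      have haS' : s(p, q) ∈ edgesIn (G.deleteEdges {b}) Set.univ :=
        mem_edgesIn.2 ⟨hsub hpq, trivial, trivial⟩
      have hz : ∀ T ≤ G, T.IsTree → h (ind T, 1) = 0 →
          fS (G.deleteEdges {b}) Set.univ (ind T, 1) = 0 := fun T hT hT' h0 =>
        fS_tree_eq_zero' hT'.isAcyclic ((hlink T hT hT' h0).mono fun x y hxy =>
          ⟨(sublevel_adj.1 hxy).1, hsub (sublevel_adj.2 ⟨hT (sublevel_adj.1 hxy).1, (sublevel_adj.1 hxy).2⟩)⟩)
      exact ⟨b, hb, TL_of_facet hG hh hle (hSlink.mono hsub) hb hbS haS' hz, fun y hy =>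
        reduced_unique hG hh hr hle hSlink.1 hb hbS haS' hz hy⟩
    · left
      have hSc : Sᶜ.Nonempty := Set.nonempty_compl.2 hu
      obtain ⟨b', hb', hb'S⟩ := exists_edge_out hG hSc
      have hz : ∀ T ≤ G, T.IsTree → h (ind T, 1) = 0 → fS G S (ind T, 1) = 0 :=
        fun T hT hT' h0 => fS_tree_eq_zero hT hT'.isAcyclic
          ((hlink T hT hT' h0).mono fun x y hxy => (sublevel_adj.1 hxy).1)
      exact ⟨S, TL_of_facet hG hh le_rfl (hSlink.mono fun x y hxy => (sublevel_adj.1 hxy).1) hb' hb'S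
        haS hz, linked_compl_of_facet hG hh hSlink.1 hSc hb' hb'S haS hz, fun y hy =>
        reduced_unique hG hh hr le_rfl hSlink.1 hb' hb'S haS hz hy⟩

/-- The weight function is a Gorenstein point. -/
theorem gorenstein_of_spade (δ : ℕ) (hδ : 0 < δ) (h2c : IsTwoConnected G) {w : Sym2 V → ℕ}
    (hw : SatisfiesSpade G δ w) : IsDeltaGorenstein (basePolytope G) δ := by
  classical
  have hG := (twoConn_iff G).1 h2c
  have hGc := hG.connected
  obtain ⟨-, ⟨hw1, hw2, hw3⟩, hwE, hwS⟩ := hw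
  set v : Sym2 V → ℝ := G.edgeSet.indicator fun e => (w e : ℝ) with hv
  have hvw : ∀ e ∈ G.edgeSet, v e = w e := fun e he => Set.indicator_of_mem he _
  have hv0 : ∀ e ∉ G.edgeSet, v e = 0 := fun e he => Set.indicator_of_notMem he _
  have hvpos : ∀ e, 0 ≤ v e := fun e => Set.indicator_nonneg (fun _ _ => Nat.cast_nonneg _) e
  have hδ' : (0 : ℝ) < δ := by exact_mod_cast hδ
  have huniv : fS G Set.univ (v, (δ : ℝ)) = 0 := by
    have := (fS_eq_iff w hvw δ 0 hG.1.1).2 (by rw [edgesIn_univ, Set.ncard_univ, add_zero, hwE])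
    exact_mod_cast this
  have hgood : ∀ S, TL G S → Linked G Sᶜ → fS G S (v, (δ : ℝ)) = 1 := fun S h1 h2 => by
    have := (fS_eq_iff w hvw δ 1 h1.1.1).2 (hwS S ((goodFlat_iff hG).2 ⟨h1, h2⟩))
    exact_mod_cast this
  have hlat : (v, (δ : ℝ)) ∈ coneLattice (basePolytope G) := by
    have := mem_lattice hG (v := v) (δ := (δ : ℤ)) ?_ hv0 (by exact_mod_cast huniv)
    · exact_mod_cast this
    · intro e
      by_cases he : e ∈ G.edgeSet
      · exact ⟨w e, by rw [hvw e he, Int.cast_natCast]⟩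
      · exact ⟨0, by rw [hv0 e he, Int.cast_zero]⟩
  have hW := lattice_mem_Wsp hlat
  refine ⟨v, mem_polytope hGc hδ' hvpos hv0 huniv (fS_nonneg hG hδ'.le huniv
    fun S h1 h2 => (hgood S h1 h2).symm ▸ zero_le_one), hlat, fun h hh hr => ?_⟩
  rcases facet_cases hG hh hr with h1 | ⟨S, hS, hSc, h1⟩ | ⟨e, he, hd, h1⟩
  · -- a single edge: the weight forces `δ = 1`, and `v` is the only lattice point
    obtain ⟨T, -, hT, hT'⟩ := hGc.exists_isTree_le_of_le_of_isAcyclic bot_le isAcyclic_bot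
    obtain ⟨e, he⟩ := hG.exists_edge
    rw [edgesIn_univ] at he
    have hE : G.edgeSet = {e} := by
      ext f
      exact ⟨fun hf => h1 f hf e he, fun hf => hf ▸ he⟩
    have htree : ∀ T ≤ G, T.IsTree → T = G := fun T hT hT' => by
      have hc2 : 2 ≤ Nat.card V := by
        induction e with
        | h x y =>
          have : ({x, y} : Set V).ncard ≤ Nat.card V := Set.ncard_le_card _
          rwa [Set.ncard_pair (G.ne_of_adj he)] at this
      have hc := tree_ncard hT'
      apply edgeSet_injective
      refine Set.eq_of_subset_of_ncard_le (edgeSet_mono hT) ?_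
      rw [hE, Set.ncard_singleton]
      omega
    have hTG := htree T hT hT'
    have hc := tree_ncard hT'
    rw [hTG, hE, Set.ncard_singleton] at hc
    have hwe : w e = δ := by
      rw [hE, finsum_mem_singleton, ← hc] at hwE
      simpa using hwE
    have hδ1 : δ = 1 := by
      rcases hw1 e he with h | h <;> omega
    have hvT : v = ind T := by
      rw [hv, ind, hTG]
      refine Set.indicator_congr fun f hf => ?_
      rw [h1 f hf e he, hwe, hδ1, Nat.cast_one]
    rw [hvT, hδ1, Nat.cast_one]
    exact form_eq_one_of_single hG hh hr hT hT' fun T' h1 h2 => (htree T' h1 h2).trans hTG.symm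
  · rw [h1 _ hW, hgood S hS hSc]
  · rw [h1 _ hW, fS_delete he, huniv, hvw e he, hw2 e he ((twoConn_iff _).2 hd)]
    simp

end

theorem stmt4 {V : Type*} [Fintype V] [DecidableEq V] (δ : ℕ) (hδ : 0 < δ)
    (G : SimpleGraph V) (h2c : IsTwoConnected G) :
    IsDeltaGorenstein (basePolytope G) δ ↔ ∃ w : Sym2 V → ℕ, SatisfiesSpade G δ w := by
  exact ⟨spade_of_gorenstein δ h2c, fun ⟨_, hw⟩ => gorenstein_of_spade δ hδ h2c hw⟩

end Gor
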